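/- arXiv:1804.08174 — 11 statements merged into one kernel-verified Lean document; each statement's English description precedes it below -/
import Mathlib

section
/- Let M be an n×n row-stochastic matrix satisfying M_{ij} > 0 ⟺ M_{ji} > 0 for all i, j, and let p be a probability distribution on {1,…,n} with p_i > 0 for all i; write p' = pM. Then the Gibbs entropy change decomposes as S(p') − S(p) = Σ_{(i,j): M_{ij}>0} p_i M_{ij} log( p_i M_{ij} / (p'_j M_{ji}) ) + Σ_{(i,j): M_{ij}>0} p_i M_{ij} log( M_{ji} / M_{ij} ), and the first sum on the right-hand side is non-negative. -/
open Finset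

/-- Decomposition of the Gibbs entropy change in one step of a Markov chain into a
non-negative entropy production term plus a heat exchange term. -/
theorem entropy_change_decomposition (n : ℕ) (M : Matrix (Fin n) (Fin n) ℝ)
    (hM0 : ∀ i j, 0 ≤ M i j) (hM1 : ∀ i, ∑ j, M i j = 1)
    (hsym : ∀ i j, 0 < M i j ↔ 0 < M j i)
    (p : Fin n → ℝ) (hppos : ∀ i, 0 < p i) (hp1 : ∑ i, p i = 1)
    (p' : Fin n → ℝ) (hp' : ∀ j, p' j = ∑ i, p i * M i j) :
    ((-∑ j, p' j * Real.log (p' j)) - (-∑ i, p i * Real.log (p i))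
      = (∑ i, ∑ j, if 0 < M i j
            then p i * M i j * Real.log (p i * M i j / (p' j * M j i)) else 0)
        + (∑ i, ∑ j, if 0 < M i j
            then p i * M i j * Real.log (M j i / M i j) else 0))
    ∧ 0 ≤ ∑ i, ∑ j, if 0 < M i j
            then p i * M i j * Real.log (p i * M i j / (p' j * M j i)) else 0 := by
  have hp'pos : ∀ i j, 0 < M i j → 0 < p' j := by
    intro i j h
    rw [hp']
    exact Finset.sum_pos' (fun k _ => mul_nonneg (hppos k).le (hM0 k j))
      ⟨i, Finset.mem_univ i, mul_pos (hppos i) h⟩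
  constructor
  · have h1 : ∑ j, p' j * Real.log (p' j) = ∑ i, ∑ j, p i * M i j * Real.log (p' j) := by
      rw [Finset.sum_comm]
      refine Finset.sum_congr rfl fun j _ => ?_
      rw [← Finset.sum_mul, ← hp']
    have h2 : ∑ i, p i * Real.log (p i) = ∑ i, ∑ j, p i * M i j * Real.log (p i) := by
      refine Finset.sum_congr rfl fun i _ => ?_
      rw [← Finset.sum_mul, ← Finset.mul_sum, hM1, mul_one]
    rw [h1, h2, neg_sub_neg, ← Finset.sum_sub_distrib, ← Finset.sum_add_distrib]
    refine Finset.sum_congr rfl fun i _ => ?_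
    rw [← Finset.sum_sub_distrib, ← Finset.sum_add_distrib]
    refine Finset.sum_congr rfl fun j _ => ?_
    by_cases h : 0 < M i j
    · have hji := (hsym i j).1 h
      have hj := hp'pos i j h
      have hi := hppos i
      rw [if_pos h, if_pos h, Real.log_div (by positivity) (by positivity),
        Real.log_mul hi.ne' h.ne', Real.log_mul hj.ne' hji.ne', Real.log_div hji.ne' h.ne']
      ring
    · have h0 : M i j = 0 := le_antisymm (not_lt.1 h) (hM0 i j)
      simp [h0]
  · have h0 : ∑ i, ∑ j, (p i * M i j - p' j * M j i) = 0 := by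
      simp only [Finset.sum_sub_distrib]
      rw [Finset.sum_comm, Finset.sum_comm (f := fun i j => p' j * M j i)]
      simp only [← Finset.mul_sum, hM1, mul_one, ← hp', sub_self]
    refine h0.symm.le.trans ?_
    refine Finset.sum_le_sum fun i _ => Finset.sum_le_sum fun j _ => ?_
    by_cases h : 0 < M i j
    · have hji := (hsym i j).1 h
      have hj := hp'pos i j h
      have hi := hppos i
      rw [if_pos h]
      have ha : 0 < p i * M i j := mul_pos hi h
      have hb : 0 < p' j * M j i := mul_pos hj hji
      have hl := Real.one_sub_inv_le_log_of_pos (div_pos ha hb)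
      have hm := mul_le_mul_of_nonneg_left hl ha.le
      refine le_trans (le_of_eq ?_) hm
      rw [inv_div, mul_sub, mul_one, mul_div_cancel₀ _ ha.ne']
    · have h0 : M i j = 0 := le_antisymm (not_lt.1 h) (hM0 i j)
      have h1 : M j i = 0 := le_antisymm (not_lt.1 fun h' => h ((hsym i j).2 h')) (hM0 j i)
      simp [h0, h1]
end

section
/- Let M be an irreducible and aperiodic n×n row-stochastic matrix with stationary distribution π, satisfying M_{ij} > 0 ⟺ M_{ji} > 0 for all i, j, and let p(0) be an initial probability distribution with p_i(0) > 0 for all i. Define for t ≥ 1 the relative entropy of the path measure with respect to its time-reversal, H(t) = Σ_{i_0,…,i_t : p_{i_0}(0) M_{i_0 i_1}⋯M_{i_{t−1} i_t} > 0} p_{i_0}(0) M_{i_0 i_1}⋯M_{i_{t−1} i_t} · log( p_{i_0}(0) M_{i_0 i_1}⋯M_{i_{t−1} i_t} / ( p_{i_t}(0) M_{i_t i_{t−1}}⋯M_{i_1 i_0} ) ). Then H(t)/t converges as t → ∞ to the stationary entropy production rate e_p = Σ_{(i,j): M_{ij}>0} π_i M_{ij} log( M_{ij} / M_{ji} ).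 -/
open Finset

/-- Powers of a row-stochastic matrix fix what the matrix fixes, are nonnegative, have row sums 1. -/
lemma pow_facts (n : ℕ) (M : Matrix (Fin n) (Fin n) ℝ)
    (hM0 : ∀ i j, 0 ≤ M i j) (v : Fin n → ℝ) (hv : M.mulVec v = v) (k : ℕ) :
    (∀ i j, 0 ≤ (M ^ k) i j) ∧ (M ^ k).mulVec v = v := by
  induction k with
  | zero =>
    refine ⟨fun i j => ?_, by simp⟩
    rw [pow_zero, Matrix.one_apply]
    split_ifs <;> norm_num
  | succ k ih =>
    refine ⟨fun i j => ?_, ?_⟩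
    · rw [pow_succ, Matrix.mul_apply]
      exact Finset.sum_nonneg fun x _ => mul_nonneg (ih.1 _ _) (hM0 _ _)
    · rw [pow_succ, ← Matrix.mulVec_mulVec, hv, ih.2]

/-- Harmonic functions of an irreducible chain are constant. -/
lemma harmonic_const (n : ℕ) (M : Matrix (Fin n) (Fin n) ℝ)
    (hM0 : ∀ i j, 0 ≤ M i j) (hM1 : ∀ i, ∑ j, M i j = 1)
    (hirr : ∀ i j, ∃ k, 1 ≤ k ∧ 0 < (M ^ k) i j) (v : Fin n → ℝ) (hv : M.mulVec v = v)
    (a b : Fin n) : v a = v b := by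
  haveI : Nonempty (Fin n) := ⟨a⟩
  obtain ⟨i, hi⟩ := Finite.exists_max v
  have key : ∀ j, v j = v i := by
    intro j
    obtain ⟨k, -, hk⟩ := hirr i j
    obtain ⟨h0, h2⟩ := pow_facts n M hM0 v hv k
    obtain ⟨-, h1⟩ := pow_facts n M hM0 (fun _ => 1)
      (by ext i; simp [Matrix.mulVec, dotProduct, hM1]) k
    have e1 : ∑ j, (M ^ k) i j = 1 := by
      have := congrFun h1 i
      simpa [Matrix.mulVec, dotProduct] using this
    have e2 : ∑ j, (M ^ k) i j * v j = v i := by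
      simpa [Matrix.mulVec, dotProduct] using congrFun h2 i
    have e3 : ∑ j, (M ^ k) i j * (v i - v j) = 0 := by
      simp only [mul_sub, Finset.sum_sub_distrib, ← Finset.sum_mul, e1, e2]
      ring
    have e4 := (Finset.sum_eq_zero_iff_of_nonneg
      (fun x _ => mul_nonneg (h0 i x) (sub_nonneg.2 (hi x)))).1 e3 j (Finset.mem_univ _)
    rcases mul_eq_zero.1 e4 with h | h
    · exact absurd h hk.ne'
    · linarith
  rw [key a, key b]

/-- Solvability of the Poisson equation. -/
lemma poisson (n : ℕ) (M : Matrix (Fin n) (Fin n) ℝ)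
    (hM0 : ∀ i j, 0 ≤ M i j) (hM1 : ∀ i, ∑ j, M i j = 1)
    (hirr : ∀ i j, ∃ k, 1 ≤ k ∧ 0 < (M ^ k) i j)
    (π : Fin n → ℝ) (hπ1 : ∑ i, π i = 1)
    (hπstat : ∀ j, ∑ i, π i * M i j = π j) (h : Fin n → ℝ) :
    ∃ g : Fin n → ℝ, ∀ i, h i + ∑ j, M i j * g j = (∑ i, π i * h i) + g i := by
  have hn : 0 < n := by
    rcases Nat.eq_zero_or_pos n with rfl | h
    · simp at hπ1
    · exact h
  let T : (Fin n → ℝ) →ₗ[ℝ] (Fin n → ℝ) := LinearMap.id - M.mulVecLin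
  let φ : (Fin n → ℝ) →ₗ[ℝ] ℝ := Fintype.linearCombination ℝ π
  have hφ : ∀ v, φ v = ∑ i, π i * v i := by
    intro v
    simp [φ, Fintype.linearCombination_apply, mul_comm]
  have hT : ∀ v i, T v i = v i - ∑ j, M i j * v j := by
    intro v i
    simp [T, Matrix.mulVec, dotProduct]
  have hker : LinearMap.ker T ≤ Submodule.span ℝ {fun _ => (1 : ℝ)} := by
    intro v hv
    have hv' : M.mulVec v = v := by
      ext i
      have := congrFun (LinearMap.mem_ker.1 hv) i
      rw [hT] at this
      simp only [Pi.zero_apply] at this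
      simp only [Matrix.mulVec, dotProduct]
      linarith
    refine Submodule.mem_span_singleton.2 ⟨v ⟨0, hn⟩, ?_⟩
    ext i
    simp only [Pi.smul_apply, smul_eq_mul, mul_one]
    exact harmonic_const n M hM0 hM1 hirr v hv' _ _
  have hk1 : Module.finrank ℝ (LinearMap.ker T) ≤ 1 :=
    (Submodule.finrank_mono hker).trans
      ((finrank_span_le_card ({fun _ => (1 : ℝ)} : Set (Fin n → ℝ))).trans (by simp))
  have hsurj : LinearMap.range φ = ⊤ := by
    rw [LinearMap.range_eq_top]
    intro c
    refine ⟨fun _ => c, ?_⟩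
    rw [hφ, ← Finset.sum_mul, hπ1, one_mul]
  have hr1 : Module.finrank ℝ (LinearMap.range φ) = 1 := by
    rw [hsurj]; simp
  have hle : LinearMap.range T ≤ LinearMap.ker φ := by
    rintro _ ⟨v, rfl⟩
    rw [LinearMap.mem_ker, hφ]
    simp only [hT, mul_sub, Finset.sum_sub_distrib, Finset.mul_sum]
    rw [Finset.sum_comm]
    simp only [← mul_assoc, ← Finset.sum_mul, hπstat]
    exact sub_self _
  have d1 := LinearMap.finrank_range_add_finrank_ker T
  have d2 := LinearMap.finrank_range_add_finrank_ker φ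
  have heq : LinearMap.range T = LinearMap.ker φ :=
    Submodule.eq_of_le_of_finrank_le hle (by omega)
  have hmem : (fun i => h i - ∑ i, π i * h i) ∈ LinearMap.range T := by
    rw [heq, LinearMap.mem_ker, hφ]
    simp only [mul_sub, Finset.sum_sub_distrib, ← Finset.sum_mul, hπ1]
    ring
  obtain ⟨g, hg⟩ := hmem
  refine ⟨g, fun i => ?_⟩
  have := congrFun hg i
  rw [hT] at this
  linarith

/-- Martingale identity on path space. -/
lemma path_sum (n : ℕ) (M : Matrix (Fin n) (Fin n) ℝ) (hM1 : ∀ i, ∑ j, M i j = 1)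
    (p0 : Fin n → ℝ) (hp01 : ∑ i, p0 i = 1)
    (L : Fin n → Fin n → ℝ) (g : Fin n → ℝ) (e : ℝ)
    (hg : ∀ i, ∑ j, M i j * (L i j + g j) = e + g i) (t : ℕ) :
    (∑ ω : Fin (t + 1) → Fin n, p0 (ω 0) * ∏ s : Fin t, M (ω s.castSucc) (ω s.succ)) = 1 ∧
    (∑ ω : Fin (t + 1) → Fin n, (p0 (ω 0) * ∏ s : Fin t, M (ω s.castSucc) (ω s.succ)) *
      ((∑ s : Fin t, L (ω s.castSucc) (ω s.succ)) + g (ω (Fin.last t)))) =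
      t * e + ∑ i, p0 i * g i := by
  induction t with
  | zero =>
    constructor
    · rw [← hp01]
      exact Fintype.sum_equiv (Equiv.funUnique (Fin 1) (Fin n)) _ _ (fun ω => by simp)
    · simp only [Nat.cast_zero, zero_mul, zero_add]
      exact Fintype.sum_equiv (Equiv.funUnique (Fin 1) (Fin n)) _ _ (fun ω => by simp)
  | succ t ih =>
    have re : ∀ F : (Fin (t + 1 + 1) → Fin n) → ℝ, ∑ ω, F ω =
        ∑ ω : Fin (t + 1) → Fin n, ∑ j : Fin n, F (Fin.snoc (α := fun _ => Fin n) ω j) := by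
      intro F
      rw [← (Fin.snocEquiv (fun _ : Fin (t + 1 + 1) => Fin n)).sum_comp, Fintype.sum_prod_type,
        Finset.sum_comm]
      rfl
    have hz : ∀ (ω : Fin (t + 1) → Fin n) (j : Fin n),
        (Fin.snoc (α := fun _ => Fin n) ω j : Fin (t + 1 + 1) → Fin n) 0 = ω 0 := by
      intro ω j
      rw [← Fin.castSucc_zero, Fin.snoc_castSucc]
    have hwt : ∀ (ω : Fin (t + 1) → Fin n) (j : Fin n),
        (∏ s : Fin (t + 1), M ((Fin.snoc (α := fun _ => Fin n) ω j : Fin (t + 1 + 1) → Fin n)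
          s.castSucc) ((Fin.snoc (α := fun _ => Fin n) ω j : Fin (t + 1 + 1) → Fin n) s.succ)) =
        (∏ s : Fin t, M (ω s.castSucc) (ω s.succ)) * M (ω (Fin.last t)) j := by
      intro ω j
      rw [Fin.prod_univ_castSucc]
      simp only [Fin.snoc_castSucc, Fin.succ_last, Fin.snoc_last, Fin.succ_castSucc]
    have hLt : ∀ (ω : Fin (t + 1) → Fin n) (j : Fin n),
        (∑ s : Fin (t + 1), L ((Fin.snoc (α := fun _ => Fin n) ω j : Fin (t + 1 + 1) → Fin n)
          s.castSucc) ((Fin.snoc (α := fun _ => Fin n) ω j : Fin (t + 1 + 1) → Fin n) s.succ)) =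
        (∑ s : Fin t, L (ω s.castSucc) (ω s.succ)) + L (ω (Fin.last t)) j := by
      intro ω j
      rw [Fin.sum_univ_castSucc]
      simp only [Fin.snoc_castSucc, Fin.succ_last, Fin.snoc_last, Fin.succ_castSucc]
    constructor
    · rw [re, ← ih.1]
      refine Finset.sum_congr rfl fun ω _ => ?_
      simp only [hz, hwt, ← Finset.mul_sum, hM1, mul_one]
    · rw [re]
      have step : ∀ ω : Fin (t + 1) → Fin n, ∀ a b : ℝ,
          ∑ j, a * M (ω (Fin.last t)) j * (b + L (ω (Fin.last t)) j + g j) =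
            a * (b + g (ω (Fin.last t))) + a * e := by
        intro ω a b
        have : ∀ j, a * M (ω (Fin.last t)) j * (b + L (ω (Fin.last t)) j + g j) =
            a * b * M (ω (Fin.last t)) j +
              a * (M (ω (Fin.last t)) j * (L (ω (Fin.last t)) j + g j)) := by
          intro j; ring
        simp only [this, Finset.sum_add_distrib, ← Finset.mul_sum, hM1, hg]
        ring
      simp only [hz, hwt, hLt, Fin.snoc_last, ← mul_assoc (p0 _), step]
      rw [Finset.sum_add_distrib, ih.2, ← Finset.sum_mul, ih.1]
      push_cast
      ring

/-- The relative entropy of the path measure of an irreducible aperiodic Markov chain with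
respect to its time reversal, divided by t, converges to the stationary entropy
production rate e_p = Σ_{(i,j): M_{ij}>0} π_i M_{ij} log(M_{ij}/M_{ji}). -/
theorem entropy_production_rate_limit (n : ℕ) (M : Matrix (Fin n) (Fin n) ℝ)
    (hM0 : ∀ i j, 0 ≤ M i j) (hM1 : ∀ i, ∑ j, M i j = 1)
    (hsym : ∀ i j, 0 < M i j ↔ 0 < M j i)
    (hirr : ∀ i j, ∃ k, 1 ≤ k ∧ 0 < (M ^ k) i j)
    (haper : ∀ i, ∀ d : ℕ, (∀ k, 1 ≤ k → 0 < (M ^ k) i i → d ∣ k) → d = 1)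
    (π : Fin n → ℝ) (hπ0 : ∀ i, 0 ≤ π i) (hπ1 : ∑ i, π i = 1)
    (hπstat : ∀ j, ∑ i, π i * M i j = π j)
    (p0 : Fin n → ℝ) (hp0pos : ∀ i, 0 < p0 i) (hp01 : ∑ i, p0 i = 1)
    (w wrev : (t : ℕ) → (Fin (t + 1) → Fin n) → ℝ)
    (hw : ∀ t ω, w t ω = p0 (ω 0) * ∏ s : Fin t, M (ω s.castSucc) (ω s.succ))
    (hwrev : ∀ t ω, wrev t ω =
      p0 (ω (Fin.last t)) * ∏ s : Fin t, M (ω s.succ) (ω s.castSucc))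
    (H : ℕ → ℝ)
    (hH : ∀ t, H t = ∑ ω : Fin (t + 1) → Fin n,
      if 0 < w t ω then w t ω * Real.log (w t ω / wrev t ω) else 0) :
    Filter.Tendsto (fun t : ℕ => H t / (t : ℝ)) Filter.atTop
      (nhds (∑ i, ∑ j,
        if 0 < M i j then π i * M i j * Real.log (M i j / M j i) else 0)) := by
  set L : Fin n → Fin n → ℝ := fun i j => Real.log (M i j / M j i) with hL
  set h : Fin n → ℝ := fun i => ∑ j, M i j * L i j with hh
  have he : (∑ i, ∑ j, if 0 < M i j then π i * M i j * Real.log (M i j / M j i) else 0) =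
      ∑ i, π i * h i := by
    refine Finset.sum_congr rfl fun i _ => ?_
    rw [hh, Finset.mul_sum]
    refine Finset.sum_congr rfl fun j _ => ?_
    split_ifs with hp
    · simp only [hL]; ring
    · have : M i j = 0 := le_antisymm (not_lt.1 hp) (hM0 i j)
      simp [this]
  rw [he]
  obtain ⟨g, hg⟩ := poisson n M hM0 hM1 hirr π hπ1 hπstat h
  set e := ∑ i, π i * h i with hedef
  have hg' : ∀ i, ∑ j, M i j * (L i j + g j) = e + g i := by
    intro i
    rw [← hg i, hh, ← Finset.sum_add_distrib]
    exact Finset.sum_congr rfl fun j _ => by ring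
  have hps := path_sum n M hM1 p0 hp01 L g e hg'
  have hw0 : ∀ t ω, 0 ≤ w t ω := by
    intro t ω
    rw [hw]
    exact mul_nonneg (hp0pos _).le (Finset.prod_nonneg fun s _ => hM0 _ _)
  have hterm : ∀ t ω, (if 0 < w t ω then w t ω * Real.log (w t ω / wrev t ω) else 0) =
      w t ω * ((∑ s : Fin t, L (ω s.castSucc) (ω s.succ)) + g (ω (Fin.last t))) +
      w t ω * (Real.log (p0 (ω 0)) - Real.log (p0 (ω (Fin.last t))) - g (ω (Fin.last t))) := by
    intro t ω
    split_ifs with hp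
    · have hpos : ∀ s : Fin t, 0 < M (ω s.castSucc) (ω s.succ) := by
        intro s
        refine lt_of_le_of_ne (hM0 _ _) fun h0 => ?_
        rw [hw, Finset.prod_eq_zero (Finset.mem_univ s) h0.symm, mul_zero] at hp
        exact lt_irrefl _ hp
      have hpos' : ∀ s : Fin t, 0 < M (ω s.succ) (ω s.castSucc) := fun s => (hsym _ _).1 (hpos s)
      have hlog : Real.log (w t ω / wrev t ω) = Real.log (p0 (ω 0)) -
          Real.log (p0 (ω (Fin.last t))) + ∑ s : Fin t, L (ω s.castSucc) (ω s.succ) := by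
        have a1 := (Finset.prod_pos fun s (_ : s ∈ Finset.univ) => hpos s).ne'
        have a2 := (Finset.prod_pos fun s (_ : s ∈ Finset.univ) => hpos' s).ne'
        rw [hw, hwrev, Real.log_div (mul_ne_zero (hp0pos _).ne' a1)
          (mul_ne_zero (hp0pos _).ne' a2), Real.log_mul (hp0pos _).ne' a1,
          Real.log_mul (hp0pos _).ne' a2, Real.log_prod (fun s _ => (hpos s).ne'),
          Real.log_prod (fun s _ => (hpos' s).ne')]
        simp only [hL, fun s : Fin t => Real.log_div (hpos s).ne' (hpos' s).ne',
          Finset.sum_sub_distrib]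
        ring
      rw [hlog]
      ring
    · have : w t ω = 0 := le_antisymm (not_lt.1 hp) (hw0 t ω)
      simp [this]
  obtain ⟨B, hB⟩ : ∃ B : ℝ, ∀ i j : Fin n,
      |Real.log (p0 i) - Real.log (p0 j) - g j| ≤ B := by
    obtain ⟨B, hB⟩ := (Set.finite_range fun x : Fin n × Fin n =>
      |Real.log (p0 x.1) - Real.log (p0 x.2) - g x.2|).bddAbove
    exact ⟨B, fun i j => hB ⟨(i, j), rfl⟩⟩
  have hbound : ∀ t : ℕ, |H t - t * e| ≤ |∑ i, p0 i * g i| + B := by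
    intro t
    obtain ⟨s1, s2⟩ := hps t
    simp only [← hw] at s1 s2
    rw [hH, Finset.sum_congr rfl (fun ω _ => hterm t ω), Finset.sum_add_distrib, s2]
    have hR : |∑ ω, w t ω * (Real.log (p0 (ω 0)) - Real.log (p0 (ω (Fin.last t))) -
        g (ω (Fin.last t)))| ≤ B := by
      refine (Finset.abs_sum_le_sum_abs _ _).trans ?_
      calc _ ≤ ∑ ω, w t ω * B := Finset.sum_le_sum fun ω _ => by
            rw [abs_mul, abs_of_nonneg (hw0 t ω)]
            exact mul_le_mul_of_nonneg_left (hB _ _) (hw0 t ω)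
        _ = B := by rw [← Finset.sum_mul, s1, one_mul]
    rw [show ∀ a b c : ℝ, a + b + c - a = b + c from fun a b c => by ring]
    exact (abs_add_le _ _).trans (add_le_add le_rfl hR)
  rw [tendsto_iff_dist_tendsto_zero]
  refine squeeze_zero' (Filter.Eventually.of_forall fun _ => dist_nonneg) ?_
    (tendsto_const_div_atTop_nhds_zero_nat (|∑ i, p0 i * g i| + B))
  filter_upwards [Filter.eventually_gt_atTop 0] with t ht
  have ht' : (0 : ℝ) < t := Nat.cast_pos.2 ht
  rw [Real.dist_eq, show H t / t - e = (H t - t * e) / t by field_simp, abs_div,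
    abs_of_pos ht']
  exact div_le_div_of_nonneg_right (hbound t) ht'.le
end

section
/- Let M be an n×n row-stochastic matrix satisfying M_{ij} > 0 ⟺ M_{ji} > 0 for all i, j, let p(0) be a probability distribution with p_i(0) > 0 for all i, and set p(t) = p(0)M^t. Define H(t) = Σ_{i_0,…,i_t : p_{i_0}(0) M_{i_0 i_1}⋯M_{i_{t−1} i_t} > 0} p_{i_0}(0) M_{i_0 i_1}⋯M_{i_{t−1} i_t} · log( p_{i_0}(0) M_{i_0 i_1}⋯M_{i_{t−1} i_t} / ( p_{i_t}(0) M_{i_t i_{t−1}}⋯M_{i_1 i_0} ) ) for t ≥ 1 and H(0) = 0. Then for every t ≥ 0, H(t+1) − H(t) = Σ_{(i,j): M_{ij}>0} p_i(t) M_{ij} log( p_i(0) M_{ij} / ( p_j(0) M_{ji} ) ). -/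
open Finset

theorem sum_snoc_aux {n : ℕ} (t : ℕ) (f : (Fin (t + 1 + 1) → Fin n) → ℝ) :
    ∑ ω, f ω = ∑ ω : Fin (t + 1) → Fin n, ∑ j : Fin n,
      f (Fin.snoc (α := fun _ => Fin n) ω j) := by
  rw [← (Fin.snocEquiv (fun _ : Fin (t + 1 + 1) => Fin n)).sum_comp f,
    Fintype.sum_prod_type, Finset.sum_comm]
  rfl

/-- One-step increment of the relative entropy of the path measure with respect to its
time reversal: H(t+1) − H(t) = Σ_{(i,j): M_{ij}>0} p_i(t) M_{ij} log(p_i(0) M_{ij} / (p_j(0) M_{ji})). -/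
theorem path_relative_entropy_step (n : ℕ) (M : Matrix (Fin n) (Fin n) ℝ)
    (hM0 : ∀ i j, 0 ≤ M i j) (hM1 : ∀ i, ∑ j, M i j = 1)
    (hsym : ∀ i j, 0 < M i j ↔ 0 < M j i)
    (p : ℕ → Fin n → ℝ)
    (hp0pos : ∀ i, 0 < p 0 i) (hp01 : ∑ i, p 0 i = 1)
    (hpstep : ∀ s i, p (s + 1) i = ∑ k, p s k * M k i)
    (w wrev : (t : ℕ) → (Fin (t + 1) → Fin n) → ℝ)
    (hw : ∀ t ω, w t ω = p 0 (ω 0) * ∏ s : Fin t, M (ω s.castSucc) (ω s.succ))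
    (hwrev : ∀ t ω, wrev t ω =
      p 0 (ω (Fin.last t)) * ∏ s : Fin t, M (ω s.succ) (ω s.castSucc))
    (H : ℕ → ℝ) (hH0 : H 0 = 0)
    (hH : ∀ t, 1 ≤ t → H t = ∑ ω : Fin (t + 1) → Fin n,
      if 0 < w t ω then w t ω * Real.log (w t ω / wrev t ω) else 0) :
    ∀ t : ℕ, H (t + 1) - H t
      = ∑ i, ∑ j, if 0 < M i j
          then p t i * M i j * Real.log (p 0 i * M i j / (p 0 j * M j i)) else 0 := by
  have hws : ∀ t (ω : Fin (t + 1) → Fin n) j,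
      w (t + 1) (Fin.snoc (α := fun _ => Fin n) ω j) = w t ω * M (ω (Fin.last t)) j := by
    intro t ω j
    rw [hw, hw, Fin.prod_univ_castSucc]
    have h0 : (Fin.snoc (α := fun _ => Fin n) ω j : Fin (t + 1 + 1) → Fin n) 0 = ω 0 := by
      rw [← Fin.castSucc_zero, Fin.snoc_castSucc]
    simp only [h0, Fin.snoc_castSucc, Fin.succ_castSucc, Fin.succ_last, Fin.snoc_last]
    ring
  have hrs : ∀ t (ω : Fin (t + 1) → Fin n) j,
      p 0 (ω (Fin.last t)) * wrev (t + 1) (Fin.snoc (α := fun _ => Fin n) ω j)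
        = wrev t ω * (p 0 j * M j (ω (Fin.last t))) := by
    intro t ω j
    rw [hwrev, hwrev, Fin.prod_univ_castSucc]
    simp only [Fin.snoc_castSucc, Fin.succ_castSucc, Fin.succ_last, Fin.snoc_last]
    ring
  have hwnn : ∀ t ω, 0 ≤ w t ω := by
    intro t ω
    rw [hw]
    exact mul_nonneg (hp0pos _).le (Finset.prod_nonneg fun _ _ => hM0 _ _)
  have hrpos : ∀ t ω, 0 < w t ω → 0 < wrev t ω := by
    intro t ω h
    rw [hwrev]
    refine mul_pos (hp0pos _) (Finset.prod_pos fun s _ => (hsym _ _).1 ?_)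
    refine lt_of_le_of_ne (hM0 _ _) fun h0 => h.ne' ?_
    rw [hw, Finset.prod_eq_zero (Finset.mem_univ s) h0.symm, mul_zero]
  have hmarg : ∀ t (f : Fin n → ℝ),
      ∑ ω : Fin (t + 1) → Fin n, w t ω * f (ω (Fin.last t)) = ∑ i, p t i * f i := by
    intro t
    induction t with
    | zero =>
      intro f
      rw [← (Equiv.funUnique (Fin 1) (Fin n)).symm.sum_comp]
      refine Finset.sum_congr rfl fun i _ => ?_
      rw [hw]
      simp
    | succ t ih =>
      intro f
      rw [sum_snoc_aux]
      simp only [hws, Fin.snoc_last]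
      have := ih (fun i => ∑ j, M i j * f j)
      simp only [Finset.mul_sum, ← mul_assoc] at this
      rw [this, Finset.sum_comm]
      refine Finset.sum_congr rfl fun i _ => ?_
      rw [hpstep, Finset.sum_mul]
  have hH' : ∀ t, H t = ∑ ω : Fin (t + 1) → Fin n,
      w t ω * Real.log (w t ω / wrev t ω) := by
    intro t
    rcases Nat.eq_zero_or_pos t with rfl | ht
    · rw [hH0]
      symm
      refine Finset.sum_eq_zero fun ω _ => ?_
      have h1 : w 0 ω = p 0 (ω 0) := by rw [hw]; simp
      have h2 : wrev 0 ω = p 0 (ω 0) := by rw [hwrev]; simp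
      rw [h1, h2, div_self (hp0pos _).ne', Real.log_one, mul_zero]
    · rw [hH t ht]
      refine Finset.sum_congr rfl fun ω _ => ?_
      split_ifs with h
      · rfl
      · rw [le_antisymm (not_lt.1 h) (hwnn t ω), zero_mul]
  intro t
  have key : ∀ (ω : Fin (t + 1) → Fin n) j,
      w (t + 1) (Fin.snoc (α := fun _ => Fin n) ω j) *
        Real.log (w (t + 1) (Fin.snoc (α := fun _ => Fin n) ω j) /
          wrev (t + 1) (Fin.snoc (α := fun _ => Fin n) ω j))
      = w t ω * Real.log (w t ω / wrev t ω) * M (ω (Fin.last t)) j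
        + w t ω * (M (ω (Fin.last t)) j * Real.log (p 0 (ω (Fin.last t)) *
          M (ω (Fin.last t)) j / (p 0 j * M j (ω (Fin.last t))))) := by
    intro ω j
    rcases (hwnn t ω).eq_or_lt with h | h
    · rw [hws, ← h]; simp
    rcases (hM0 (ω (Fin.last t)) j).eq_or_lt with h' | h'
    · rw [hws, ← h']; simp
    have hr := hrpos t ω h
    have hm := (hsym _ _).1 h'
    have hpi := hp0pos (ω (Fin.last t))
    have hpj := hp0pos j
    have hR : wrev (t + 1) (Fin.snoc (α := fun _ => Fin n) ω j)
        = wrev t ω * (p 0 j * M j (ω (Fin.last t))) / p 0 (ω (Fin.last t)) := by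
      rw [eq_div_iff hpi.ne', ← hrs]; ring
    have hq : w t ω * M (ω (Fin.last t)) j /
        (wrev t ω * (p 0 j * M j (ω (Fin.last t))) / p 0 (ω (Fin.last t)))
        = (w t ω / wrev t ω) * (p 0 (ω (Fin.last t)) *
          M (ω (Fin.last t)) j / (p 0 j * M j (ω (Fin.last t)))) := by
      field_simp
    rw [hws, hR, hq, Real.log_mul (by positivity) (by positivity)]
    ring
  rw [hH' (t + 1), hH' t, sum_snoc_aux]
  simp only [key, Finset.sum_add_distrib, ← Finset.mul_sum, hM1, mul_one]
  rw [add_sub_cancel_left]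
  rw [hmarg t (fun i => ∑ j, M i j * Real.log (p 0 i * M i j / (p 0 j * M j i)))]
  refine Finset.sum_congr rfl fun i _ => ?_
  rw [Finset.mul_sum]
  refine Finset.sum_congr rfl fun j _ => ?_
  split_ifs with h
  · ring
  · rw [le_antisymm (not_lt.1 h) (hM0 i j)]; simp
end

section
/- Let M be an irreducible n×n row-stochastic matrix satisfying M_{ij} > 0 ⟺ M_{ji} > 0 for all i, j, with (unique) stationary probability distribution π (which then satisfies π_i > 0 for all i). Then the stationary entropy production rate e_p = Σ_{(i,j): M_{ij}>0} π_i M_{ij} log( M_{ij} / M_{ji} ) is non-negative, and e_p = 0 if and only if M is in detailed balance, i.e., π_i M_{ij} = π_j M_{ji} for all i, j. -/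
open Finset

lemma ep_aux_lt (a b : ℝ) (ha : 0 < a) (hb : 0 < b) (hab : a ≠ b) :
    0 < a * (Real.log a - Real.log b) - a + b := by
  have hne : b / a ≠ 1 := by
    intro h
    rw [div_eq_one_iff_eq ha.ne'] at h
    exact hab h.symm
  have h := Real.log_lt_sub_one_of_pos (div_pos hb ha) hne
  rw [Real.log_div hb.ne' ha.ne'] at h
  have h2 := mul_lt_mul_of_pos_left h ha
  have h3 : a * (b / a - 1) = b - a := by field_simp
  rw [h3] at h2
  linarith

/-- The stationary entropy production rate is non-negative, and it vanishes if and only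
if the chain is in detailed balance. -/
theorem entropy_production_nonneg_and_zero_iff_db (n : ℕ)
    (M : Matrix (Fin n) (Fin n) ℝ)
    (hM0 : ∀ i j, 0 ≤ M i j) (hM1 : ∀ i, ∑ j, M i j = 1)
    (hsym : ∀ i j, 0 < M i j ↔ 0 < M j i)
    (hirr : ∀ i j, ∃ k, 1 ≤ k ∧ 0 < (M ^ k) i j)
    (π : Fin n → ℝ) (hπ0 : ∀ i, 0 ≤ π i) (hπ1 : ∑ i, π i = 1)
    (hπstat : ∀ j, ∑ i, π i * M i j = π j) :
    0 ≤ (∑ i, ∑ j, if 0 < M i j then π i * M i j * Real.log (M i j / M j i) else 0)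
    ∧ ((∑ i, ∑ j, if 0 < M i j then π i * M i j * Real.log (M i j / M j i) else 0) = 0
        ↔ ∀ i j, π i * M i j = π j * M j i) := by
  have hpow : ∀ k : ℕ, ∀ j, ∑ i, π i * (M ^ k) i j = π j := by
    intro k
    induction k with
    | zero => intro j; simp [Matrix.one_apply]
    | succ k ih =>
      intro j
      simp only [pow_succ, Matrix.mul_apply, Finset.mul_sum]
      rw [Finset.sum_comm]
      rw [← hπstat j]
      refine Finset.sum_congr rfl fun l _ => ?_
      rw [← ih l, Finset.sum_mul]
      refine Finset.sum_congr rfl fun i _ => ?_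
      ring
  have hpow0 : ∀ k : ℕ, ∀ i j, 0 ≤ (M ^ k) i j := by
    intro k
    induction k with
    | zero =>
      intro i j
      simp only [pow_zero, Matrix.one_apply]
      split_ifs <;> norm_num
    | succ k ih =>
      intro i j
      simp only [pow_succ, Matrix.mul_apply]
      exact Finset.sum_nonneg fun l _ => mul_nonneg (ih i l) (hM0 l j)
  have hπpos : ∀ j, 0 < π j := by
    intro j
    obtain ⟨i, hi⟩ : ∃ i, 0 < π i := by
      by_contra! h
      have : ∑ i, π i ≤ 0 := Finset.sum_nonpos fun i _ => h i
      linarith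
    obtain ⟨k, _, hk⟩ := hirr i j
    rw [← hpow k j]
    exact Finset.sum_pos' (fun l _ => mul_nonneg (hπ0 l) (hpow0 k l j))
      ⟨i, Finset.mem_univ i, mul_pos hi hk⟩
  have hzero : ∀ i j, ¬ 0 < M i j → M i j = 0 ∧ M j i = 0 := by
    intro i j h
    exact ⟨le_antisymm (not_lt.mp h) (hM0 i j),
      le_antisymm (not_lt.mp (fun h' => h ((hsym i j).mpr h'))) (hM0 j i)⟩
  obtain ⟨g, hg⟩ : ∃ g : Fin n → Fin n → ℝ, g = fun i j =>
      (if 0 < M i j then π i * M i j * Real.log (M i j / M j i) else 0)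
        + π i * M i j * (Real.log (π i) - 1) - π i * M i j * Real.log (π j)
        + π j * M j i := ⟨_, rfl⟩
  have hgform : ∀ i j, 0 < M i j → g i j = (π i * M i j) *
      (Real.log (π i * M i j) - Real.log (π j * M j i)) - π i * M i j + π j * M j i := by
    intro i j h
    have h' := (hsym i j).mp h
    rw [hg]
    simp only [if_pos h]
    rw [Real.log_div h.ne' h'.ne', Real.log_mul (hπpos i).ne' h.ne',
      Real.log_mul (hπpos j).ne' h'.ne']
    ring
  have hgz : ∀ i j, π i * M i j = π j * M j i → g i j = 0 := by
    intro i j h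
    by_cases hp : 0 < M i j
    · rw [hgform i j hp, h]; ring
    · obtain ⟨h1, h2⟩ := hzero i j hp
      simp [hg, h1, h2]
  have hgp : ∀ i j, π i * M i j ≠ π j * M j i → 0 < g i j := by
    intro i j h
    by_cases hp : 0 < M i j
    · rw [hgform i j hp]
      exact ep_aux_lt _ _ (mul_pos (hπpos i) hp) (mul_pos (hπpos j) ((hsym i j).mp hp)) h
    · obtain ⟨h1, h2⟩ := hzero i j hp
      simp [h1, h2] at h
  have hg0 : ∀ i j, 0 ≤ g i j := by
    intro i j
    by_cases h : π i * M i j = π j * M j i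
    · exact (hgz i j h).ge
    · exact (hgp i j h).le
  have hsum : (∑ i, ∑ j, if 0 < M i j then π i * M i j * Real.log (M i j / M j i) else 0)
      = ∑ i, ∑ j, g i j := by
    have e1 : ∑ i, ∑ j, π i * M i j * (Real.log (π i) - 1)
        = ∑ i, π i * (Real.log (π i) - 1) := by
      refine Finset.sum_congr rfl fun i _ => ?_
      rw [← Finset.sum_mul, ← Finset.mul_sum, hM1, mul_one]
    have e2 : ∑ i, ∑ j, π i * M i j * Real.log (π j) = ∑ j, π j * Real.log (π j) := by
      rw [Finset.sum_comm]
      refine Finset.sum_congr rfl fun j _ => ?_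
      rw [← Finset.sum_mul, hπstat]
    have e3 : ∑ i, ∑ j, π j * M j i = ∑ i, π i :=
      Finset.sum_congr rfl fun i _ => hπstat i
    rw [hg]
    simp only [Finset.sum_add_distrib, Finset.sum_sub_distrib]
    rw [e1, e2, e3]
    simp only [mul_sub, Finset.sum_sub_distrib, mul_one]
    ring
  rw [hsum]
  refine ⟨Finset.sum_nonneg fun i _ => Finset.sum_nonneg fun j _ => hg0 i j, ?_, ?_⟩
  · intro h i j
    by_contra hne
    have h1 := (Finset.sum_eq_zero_iff_of_nonneg
      (fun i _ => Finset.sum_nonneg fun j _ => hg0 i j)).mp h i (Finset.mem_univ i)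
    have h2 := (Finset.sum_eq_zero_iff_of_nonneg
      (fun j _ => hg0 i j)).mp h1 j (Finset.mem_univ j)
    exact (hgp i j hne).ne' h2
  · intro h
    exact Finset.sum_eq_zero fun i _ => Finset.sum_eq_zero fun j _ => hgz i j (h i j)
end

section
/- Let M be an n×n row-stochastic matrix with stationary probability distribution π with π_i > 0 for all i, and let p be a probability distribution on {1,…,n} with p_i > 0 for all i. Define the stationary time-reversed transition matrix by M^-_{ji} = π_i M_{ij} / π_j. Then Σ_{(i,j): M_{ij}>0} p_i M_{ij} log( p_i M_{ij} / ( (pM)_j M^-_{ji} ) ) = H(p, π) − H(pM, π); in particular this quantity equals the decrease of the relative entropy with respect to π in one step. -/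
open Finset

/-- The non-negative quantity Σ_{(i,j):M_{ij}>0} p_i M_{ij} log( p_i M_{ij} / ((pM)_j M⁻_{ji}) ),
where M⁻_{ji} = π_i M_{ij}/π_j 's the stationary time reversal, equals the one-step decrease
H(p,π) − H(pM,π) of the relative entropy with respect to the stationary distribution. -/
theorem one_step_relative_entropy_decrease (n : ℕ)
    (M : Matrix (Fin n) (Fin n) ℝ)
    (hM0 : ∀ i j, 0 ≤ M i j) (hM1 : ∀ i, ∑ j, M i j = 1)
    (π : Fin n → ℝ) (hπpos : ∀ i, 0 < π i) (hπ1 : ∑ i, π i = 1)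
    (hπstat : ∀ j, ∑ i, π i * M i j = π j)
    (p : Fin n → ℝ) (hppos : ∀ i, 0 < p i) (hp1 : ∑ i, p i = 1)
    (Mrev : Matrix (Fin n) (Fin n) ℝ)
    (hMrev : ∀ i j, Mrev j i = π i * M i j / π j) :
    (∑ i, ∑ j, if 0 < M i j
        then p i * M i j * Real.log (p i * M i j / ((∑ k, p k * M k j) * Mrev j i))
        else 0)
      = (∑ i, p i * Real.log (p i / π i))
        - ∑ j, (∑ k, p k * M k j) * Real.log ((∑ k, p k * M k j) / π j) := by
  have key : ∀ i j, (if 0 < M i j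
        then p i * M i j * Real.log (p i * M i j / ((∑ k, p k * M k j) * Mrev j i))
        else 0) = M i j * (p i * Real.log (p i / π i))
          - p i * M i j * Real.log ((∑ k, p k * M k j) / π j) := by
    intro i j
    split_ifs with h
    · have hq : 0 < ∑ k, p k * M k j :=
        lt_of_lt_of_le (mul_pos (hppos i) h)
          (Finset.single_le_sum (f := fun k => p k * M k j)
            (fun k _ => mul_nonneg (hppos k).le (hM0 k j)) (Finset.mem_univ i))
      generalize (∑ k, p k * M k j) = q at hq ⊢
      have h1 := hppos i
      have h2 := hπpos i
      have h3 := hπpos j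
      have e : p i * M i j / (q * Mrev j i) = (p i / π i) / (q / π j) := by
        rw [hMrev]
        field_simp
      rw [e, Real.log_div (div_pos h1 h2).ne' (div_pos hq h3).ne']
      ring
    · have h0 : M i j = 0 := le_antisymm (not_lt.mp h) (hM0 i j)
      simp [h0]
  simp only [key, Finset.sum_sub_distrib]
  congr 1
  · refine Finset.sum_congr rfl fun i _ => ?_
    rw [← Finset.sum_mul, hM1, one_mul]
  · rw [Finset.sum_comm]
    refine Finset.sum_congr rfl fun j _ => ?_
    rw [← Finset.sum_mul]
end

section
/- (Markov chain tree theorem.) Let M be an irreducible n×n row-stochastic matrix. For a state i, encode a spanning directed rooted tree with root i as a map τ : {1,…,n} → {1,…,n} with τ(i) = i such that for every state j there exists k ≥ 0 with τ^k(j) = i; its weight is e(τ) = Π_{j ≠ i} M_{j, τ(j)}, and e(𝒯_i) denotes the sum of e(τ) over all trees τ rooted at i. Then Σ = Σ_{k=1}^n e(𝒯_k) > 0, and the vector π with π_i = e(𝒯_i)/Σ is the (unique) stationary probability distribution of M, i.e., π_i ≥ 0, Σ_i π_i = 1 and Σ_i π_i M_{ij} = π_j for all j. -/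
open Finset
open scoped Classical

theorem mct_reach_congr {n : ℕ} (i : Fin n) (σ τ : Fin n → Fin n)
    (h : ∀ m, m ≠ i → σ m = τ m) (hσ : ∀ m, ∃ k, σ^[k] m = i) : ∀ m, ∃ k, τ^[k] m = i := by
  have key : ∀ k m, σ^[k] m = i → ∃ k, τ^[k] m = i := by
    intro k
    induction k with
    | zero => intro m hm; exact ⟨0, hm⟩
    | succ k ih =>
      intro m hm
      by_cases hmi : m = i
      · exact ⟨0, hmi⟩
      · rw [Function.iterate_succ_apply] at hm
        obtain ⟨l, hl⟩ := ih _ hm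
        refine ⟨l + 1, ?_⟩
        rw [Function.iterate_succ_apply, ← h m hmi]
        exact hl
  intro m
  obtain ⟨k, hk⟩ := hσ m
  exact key k m hk

theorem mct_sum {n : ℕ} (M : Matrix (Fin n) (Fin n) ℝ) (i : Fin n) (g : Fin n → ℝ) :
    (∑ τ : Fin n → Fin n, if (τ i = i ∧ ∀ j, ∃ k, τ^[k] j = i)
        then ∏ j ∈ Finset.univ.erase i, M j (τ j) else 0) * ∑ a, M i a * g a =
    ∑ σ : Fin n → Fin n, if (∀ j, ∃ k, σ^[k] j = i) then (∏ j, M j (σ j)) * g (σ i) else 0 := by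
  rw [← Finset.sum_filter, ← Finset.sum_filter, Finset.sum_mul_sum, ← Finset.sum_product']
  refine Finset.sum_bij' (fun p _ => Function.update p.1 i p.2)
    (fun σ _ => (Function.update σ i i, σ i)) ?_ ?_ ?_ ?_ ?_
  · rintro ⟨τ, a⟩ h
    simp only [mem_product, mem_filter, mem_univ, true_and, and_true] at h ⊢
    exact mct_reach_congr i τ _ (fun m hm => by simp [hm]) h.2
  · intro σ h
    simp only [mem_product, mem_filter, mem_univ, true_and, and_true] at h ⊢
    exact ⟨by simp, mct_reach_congr i σ _ (fun m hm => by simp [hm]) h⟩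
  · rintro ⟨τ, a⟩ h
    simp only [mem_product, mem_filter, mem_univ, true_and, and_true] at h
    have h1 : Function.update τ i i = τ := by
      conv_rhs => rw [← Function.update_eq_self i τ, h.1]
    simp [h1]
  · intro σ h
    simp
  · rintro ⟨τ, a⟩ h
    rw [← Finset.mul_prod_erase _ _ (mem_univ i)]
    have : ∏ j ∈ univ.erase i, M j (Function.update τ i a j) = ∏ j ∈ univ.erase i, M j (τ j) := by
      refine Finset.prod_congr rfl fun j hj => ?_
      rw [Function.update_of_ne (Finset.ne_of_mem_erase hj)]
    simp only [this, Function.update_self]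
    ring

theorem mct_cut {n : ℕ} (σ : Fin n → Fin n) (j : Fin n) (W : ℝ) :
    (∑ i, if (∀ m, ∃ k, σ^[k] m = i) then W * (if σ i = j then 1 else 0) else 0) =
      if (∀ m, ∃ k, σ^[k] m = j) then W else 0 := by
  by_cases hj : ∀ m, ∃ k, σ^[k] m = j
  · rw [if_pos hj]
    obtain ⟨k, hk⟩ := hj (σ j)
    have hs : σ (σ^[k] j) = j := by
      rw [← Function.iterate_succ_apply' σ, Function.iterate_succ_apply]; exact hk
    have hR : ∀ m, ∃ l, σ^[l] m = σ^[k] j := by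
      intro m
      obtain ⟨l, hl⟩ := hj m
      exact ⟨k + l, by rw [Function.iterate_add_apply, hl]⟩
    rw [Finset.sum_eq_single (σ^[k] j)]
    · rw [if_pos hR, if_pos hs, mul_one]
    · intro b _ hb
      by_cases hRb : ∀ m, ∃ l, σ^[l] m = b
      · by_cases hsb : σ b = j
        · exfalso
          apply hb
          have per : ∀ x, (∀ m, ∃ l, σ^[l] m = x) → x ∈ Function.periodicPts σ := by
            intro x hx
            obtain ⟨l, hl⟩ := hx (σ x)
            exact ⟨l + 1, Nat.succ_pos l, hl⟩
          exact (Function.bijOn_periodicPts σ).injOn (per _ hRb) (per _ hR) (hsb.trans hs.symm)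
        · simp [hsb]
      · rw [if_neg hRb]
    · intro h; exact absurd (mem_univ _) h
  · rw [if_neg hj]
    refine Finset.sum_eq_zero fun i _ => ?_
    by_cases hR : ∀ m, ∃ l, σ^[l] m = i
    · by_cases hs : σ i = j
      · exfalso
        apply hj
        intro m
        obtain ⟨l, hl⟩ := hR m
        exact ⟨l + 1, by rw [Function.iterate_succ_apply', hl, hs]⟩
      · simp [hs]
    · rw [if_neg hR]

theorem mct_pow_nonneg {n : ℕ} (M : Matrix (Fin n) (Fin n) ℝ) (hM0 : ∀ i j, 0 ≤ M i j) (k : ℕ) :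
    ∀ i j, 0 ≤ (M ^ k) i j := by
  induction k with
  | zero => intro i j; rw [pow_zero, Matrix.one_apply]; split_ifs <;> norm_num
  | succ k ih =>
    intro i j
    rw [pow_succ, Matrix.mul_apply]
    exact Finset.sum_nonneg fun a _ => mul_nonneg (ih _ _) (hM0 _ _)

theorem mct_exists_tree {n : ℕ} (M : Matrix (Fin n) (Fin n) ℝ)
    (hM0 : ∀ i j, 0 ≤ M i j) (hirr : ∀ i j, ∃ k, 1 ≤ k ∧ 0 < (M ^ k) i j) (i : Fin n) :
    ∃ τ : Fin n → Fin n, (τ i = i ∧ ∀ j, ∃ k, τ^[k] j = i) ∧ ∀ j, j ≠ i → 0 < M j (τ j) := by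
  have hex : ∀ m, ∃ k, 0 < (M ^ k) m i := fun m => by
    obtain ⟨k, _, hk⟩ := hirr m i
    exact ⟨k, hk⟩
  let d : Fin n → ℕ := fun m => Nat.find (hex m)
  have hstep : ∀ m, ∃ a, (m = i → a = i) ∧ (m ≠ i → 0 < M m a ∧ d a < d m) := by
    intro m
    by_cases hm : m = i
    · exact ⟨i, fun _ => rfl, fun h => absurd hm h⟩
    · have hd : 0 < (M ^ d m) m i := Nat.find_spec (hex m)
      rcases hdm : d m with _ | k
      · rw [hdm, pow_zero, Matrix.one_apply, if_neg hm] at hd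
        exact absurd hd (lt_irrefl _)
      · rw [hdm, pow_succ', Matrix.mul_apply] at hd
        obtain ⟨a, _, ha⟩ := Finset.exists_lt_of_sum_lt
          (s := univ) (f := fun _ => (0 : ℝ)) (g := fun a => M m a * (M ^ k) a i) (by simpa using hd)
        have h1 : 0 < M m a := lt_of_le_of_ne (hM0 _ _) fun h => by simp [← h] at ha
        have h2 : 0 < (M ^ k) a i := pos_of_mul_pos_right ha h1.le
        exact ⟨a, fun h => absurd h hm, fun _ => ⟨h1, Nat.lt_succ_of_le (Nat.find_min' (hex a) h2)⟩⟩
  choose τ h1 h2 using hstep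
  refine ⟨τ, ⟨h1 i rfl, ?_⟩, fun j hj => (h2 j hj).1⟩
  have key : ∀ N m, d m ≤ N → ∃ k, τ^[k] m = i := by
    intro N
    induction N with
    | zero =>
      intro m hm
      by_cases hmi : m = i
      · exact ⟨0, hmi⟩
      · have := (h2 m hmi).2; omega
    | succ N ih =>
      intro m hm
      by_cases hmi : m = i
      · exact ⟨0, hmi⟩
      · have := (h2 m hmi).2
        obtain ⟨k, hk⟩ := ih (τ m) (by omega)
        exact ⟨k + 1, hk⟩
  exact fun m => key _ m le_rfl

theorem mct_stat_zero {n : ℕ} (M : Matrix (Fin n) (Fin n) ℝ)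
    (hM0 : ∀ i j, 0 ≤ M i j) (hirr : ∀ i j, ∃ k, 1 ≤ k ∧ 0 < (M ^ k) i j)
    (v : Fin n → ℝ) (hv : ∀ i, 0 ≤ v i) (hs : ∀ j, ∑ i, v i * M i j = v j)
    (i₀ : Fin n) (h0 : v i₀ = 0) (m : Fin n) : v m = 0 := by
  have hk : ∀ k, Matrix.vecMul v (M ^ k) = v := by
    intro k
    induction k with
    | zero => simp
    | succ k ih =>
      rw [pow_succ, ← Matrix.vecMul_vecMul, ih]
      funext j
      exact hs j
  obtain ⟨k, _, hpos⟩ := hirr m i₀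
  have h1 : ∑ i, v i * (M ^ k) i i₀ = 0 := by
    rw [← h0]; exact congrFun (hk k) i₀
  have h2 := (Finset.sum_eq_zero_iff_of_nonneg
    (fun i _ => mul_nonneg (hv i) (mct_pow_nonneg M hM0 k i i₀))).1 h1 m (mem_univ m)
  rcases mul_eq_zero.1 h2 with h | h
  · exact h
  · exact absurd h hpos.ne'

/-- Markov chain tree theorem: for an irreducible row-stochastic matrix, the vector
π_i = e(𝒯_i)/Σ of normalized tree weights is the unique stationary distribution. -/
theorem markov_chain_tree_theorem (n : ℕ) (hn : 1 ≤ n)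
    (M : Matrix (Fin n) (Fin n) ℝ)
    (hM0 : ∀ i j, 0 ≤ M i j) (hM1 : ∀ i, ∑ j, M i j = 1)
    (hirr : ∀ i j, ∃ k, 1 ≤ k ∧ 0 < (M ^ k) i j)
    (eT : Fin n → ℝ)
    (heT : ∀ i, eT i = ∑ τ : Fin n → Fin n,
      if (τ i = i ∧ ∀ j, ∃ k, τ^[k] j = i)
        then ∏ j ∈ Finset.univ.erase i, M j (τ j) else 0)
    (Z : ℝ) (hZ : Z = ∑ k, eT k) :
    0 < Z ∧
    (∀ i, 0 ≤ eT i / Z) ∧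
    (∑ i, eT i / Z) = 1 ∧
    (∀ j, ∑ i, (eT i / Z) * M i j = eT j / Z) ∧
    (∀ ρ : Fin n → ℝ, (∀ i, 0 ≤ ρ i) → (∑ i, ρ i) = 1 →
      (∀ j, ∑ i, ρ i * M i j = ρ j) → ∀ i, ρ i = eT i / Z) := by
  have hpos : ∀ i, 0 < eT i := by
    intro i
    rw [heT i]
    obtain ⟨τ, hτ, hw⟩ := mct_exists_tree M hM0 hirr i
    refine Finset.sum_pos' (fun τ _ => ?_) ⟨τ, mem_univ _, ?_⟩
    · split_ifs
      · exact Finset.prod_nonneg fun j _ => hM0 _ _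
      · exact le_rfl
    · rw [if_pos hτ]
      exact Finset.prod_pos fun j hj => hw j (Finset.ne_of_mem_erase hj)
  have hZpos : 0 < Z := by
    rw [hZ]
    exact Finset.sum_pos (fun i _ => hpos i) ⟨⟨0, hn⟩, mem_univ _⟩
  have hstat : ∀ j, ∑ i, eT i * M i j = eT j := by
    intro j
    have h1 : ∀ i, eT i * M i j = ∑ σ : Fin n → Fin n,
        if (∀ m, ∃ k, σ^[k] m = i) then (∏ m, M m (σ m)) * (if σ i = j then 1 else 0) else 0 := by
      intro i
      have := mct_sum M i (fun a => if a = j then 1 else 0)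
      rw [← heT i] at this
      rw [← this]
      simp
    have h2 : eT j = ∑ σ : Fin n → Fin n,
        if (∀ m, ∃ k, σ^[k] m = j) then (∏ m, M m (σ m)) else 0 := by
      have := mct_sum M j (fun _ => 1)
      rw [← heT j] at this
      simpa [hM1] using this
    rw [Finset.sum_congr rfl fun i _ => h1 i, Finset.sum_comm, h2]
    exact Finset.sum_congr rfl fun σ _ => mct_cut σ j _
  refine ⟨hZpos, fun i => (div_pos (hpos i) hZpos).le, ?_, ?_, ?_⟩
  · rw [← Finset.sum_div, ← hZ, div_self hZpos.ne']
  · intro j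
    rw [← hstat j, Finset.sum_div]
    exact Finset.sum_congr rfl fun i _ => by ring
  · intro ρ hρ0 hρ1 hρs
    obtain ⟨i₀, _, hmin⟩ := Finset.exists_min_image univ (fun i => ρ i / eT i)
      ⟨⟨0, hn⟩, mem_univ _⟩
    set c := ρ i₀ / eT i₀ with hc
    have hv : ∀ m, ρ m - c * eT m = 0 := by
      refine mct_stat_zero M hM0 hirr (fun m => ρ m - c * eT m) ?_ ?_ i₀ ?_
      · intro i
        have := hmin i (mem_univ i)
        have := (le_div_iff₀ (hpos i)).1 this
        exact sub_nonneg.2 this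
      · intro j
        simp only [sub_mul, Finset.sum_sub_distrib, mul_assoc, ← Finset.mul_sum, hρs, hstat]
      · simp only [hc, div_mul_cancel₀ _ (hpos i₀).ne', sub_self]
    have hcZ : c * Z = 1 := by
      rw [hZ, Finset.mul_sum, ← hρ1]
      exact Finset.sum_congr rfl fun i _ => (sub_eq_zero.1 (hv i)).symm
    intro i
    rw [sub_eq_zero.1 (hv i), eq_div_iff hZpos.ne']
    calc c * eT i * Z = (c * Z) * eT i := by ring
      _ = eT i := by rw [hcZ, one_mul]
end

section
/- Let M be an n×n row-stochastic matrix and let Q be the maximum entropy RDS measure on the set of all maps α : {1,…,n} → {1,…,n}, given by Q(α) = Π_{i=1}^n M_{i, α(i)}. For a map α let Per(α) = {x : α^k(x) = x for some k ≥ 1} be its set of periodic points; say α has a single attractor if for all x, y ∈ Per(α) there exists k ≥ 0 with α^k(x) = y, and define ‖A(α)‖ = |Per(α)| if α has a single attractor and ‖A(α)‖ = 0 otherwise. Then Σ_{k=1}^n e(𝒯_k) = Σ_α Q(α) ‖A(α)‖, i.e., the tree-weight normalization factor equals the expected size of the single attractor of a Q-random map. -/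
open Finset
open scoped Classical

theorem aux_reach {n : ℕ} (α β : Fin n → Fin n) (i : Fin n) (h : ∀ x, x ≠ i → β x = α x) :
    ∀ (k : ℕ) (j : Fin n), α^[k] j = i → ∃ m, β^[m] j = i := by
  intro k
  induction k with
  | zero => intro j hj; exact ⟨0, hj⟩
  | succ k ih =>
    intro j hj
    by_cases hji : j = i
    · exact ⟨0, hji⟩
    · rw [Function.iterate_succ_apply] at hj
      obtain ⟨m, hm⟩ := ih _ hj
      refine ⟨m + 1, ?_⟩
      rw [Function.iterate_succ_apply, h j hji, hm]

theorem aux_update {n : ℕ} (α : Fin n → Fin n) (i c : Fin n) (h : ∀ j, ∃ k, α^[k] j = i) :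
    ∀ j, ∃ k, (Function.update α i c)^[k] j = i := by
  intro j
  obtain ⟨k, hk⟩ := h j
  exact aux_reach α _ i (fun x hx => Function.update_of_ne hx _ _) k j hk

theorem aux_tree {n : ℕ} (M : Matrix (Fin n) (Fin n) ℝ) (hM1 : ∀ i, ∑ j, M i j = 1) (i : Fin n) :
    (∑ τ : Fin n → Fin n, if (τ i = i ∧ ∀ j, ∃ k, τ^[k] j = i)
        then ∏ j ∈ Finset.univ.erase i, M j (τ j) else 0) =
    ∑ α : Fin n → Fin n, if (∀ j, ∃ k, α^[k] j = i) then ∏ j, M j (α j) else 0 := by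
  rw [← Finset.sum_filter, ← Finset.sum_filter]
  have h1 : ∀ τ : Fin n → Fin n, ∏ j ∈ Finset.univ.erase i, M j (τ j)
      = ∑ c, M i c * ∏ j ∈ Finset.univ.erase i, M j (τ j) := by
    intro τ
    rw [← Finset.sum_mul, hM1, one_mul]
  rw [Finset.sum_congr rfl (fun τ _ => h1 τ), ← Finset.sum_product']
  refine Finset.sum_nbij' (fun p => Function.update p.1 i p.2)
    (fun α => (Function.update α i i, α i)) ?_ ?_ ?_ ?_ ?_
  · rintro ⟨τ, c⟩ h
    simp only [mem_product, mem_filter, mem_univ, true_and, and_true] at h ⊢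
    exact aux_update τ i c h.2
  · intro α h
    simp only [mem_product, mem_filter, mem_univ, true_and, and_true] at h ⊢
    exact ⟨Function.update_self _ _ _, aux_update α i i h⟩
  · rintro ⟨τ, c⟩ h
    simp only [mem_product, mem_filter, mem_univ, true_and, and_true] at h
    have h2 : Function.update τ i i = τ := by
      funext x
      by_cases hx : x = i
      · subst hx; rw [Function.update_self, h.1]
      · rw [Function.update_of_ne hx]
    simp [h2]
  · intro α _
    simp
  · rintro ⟨τ, c⟩ _
    rw [← Finset.mul_prod_erase Finset.univ _ (Finset.mem_univ i)]
    simp only [Function.update_self]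
    congr 1
    refine Finset.prod_congr rfl fun j hj => ?_
    rw [Function.update_of_ne (Finset.ne_of_mem_erase hj)]

theorem aux_event {n : ℕ} (α : Fin n → Fin n) (j : Fin n) :
    ∃ m k, 1 ≤ k ∧ α^[k] (α^[m] j) = α^[m] j := by
  obtain ⟨a, b, hab, h⟩ := Finite.exists_ne_map_eq_of_infinite (fun k : ℕ => α^[k] j)
  rcases Nat.lt_or_gt_of_ne hab with hl | hl
  · refine ⟨a, b - a, by omega, ?_⟩
    rw [← Function.iterate_add_apply, Nat.sub_add_cancel hl.le, h]
  · refine ⟨b, a - b, by omega, ?_⟩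
    rw [← Function.iterate_add_apply, Nat.sub_add_cancel hl.le, h]

theorem aux_per {n : ℕ} (α : Fin n → Fin n) (i : Fin n) (h : ∀ j, ∃ k, α^[k] j = i) :
    ∃ k, 1 ≤ k ∧ α^[k] i = i := by
  obtain ⟨k, hk⟩ := h (α i)
  exact ⟨k + 1, by omega, by rw [Function.iterate_succ_apply, hk]⟩

theorem aux_back {n : ℕ} (α : Fin n → Fin n) (i y : Fin n) (h : ∃ k, α^[k] y = i)
    (hy : ∃ k, 1 ≤ k ∧ α^[k] y = y) : ∃ k, α^[k] i = y := by
  obtain ⟨a, ha⟩ := h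
  obtain ⟨p, hp, hpy⟩ := hy
  refine ⟨p * a - a, ?_⟩
  rw [← ha, ← Function.iterate_add_apply, Nat.sub_add_cancel (Nat.le_mul_of_pos_left a hp),
    Function.iterate_mul]
  exact Function.iterate_fixed hpy a

/-- The tree-weight normalization factor Σ_k e(𝒯_k) equals the expected size of the
single attractor of a random map drawn from the maximum entropy RDS measure
Q(α) = Π_i M_{i,α(i)}. -/
theorem normalization_is_expected_attractor_size (n : ℕ)
    (M : Matrix (Fin n) (Fin n) ℝ)
    (hM0 : ∀ i j, 0 ≤ M i j) (hM1 : ∀ i, ∑ j, M i j = 1)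
    (Q : (Fin n → Fin n) → ℝ) (hQ : ∀ α, Q α = ∏ i, M i (α i))
    (Per : (Fin n → Fin n) → Finset (Fin n))
    (hPer : ∀ α, Per α = Finset.univ.filter fun x => ∃ k, 1 ≤ k ∧ α^[k] x = x)
    (single : (Fin n → Fin n) → Prop)
    (hsingle : ∀ α, single α ↔ ∀ x ∈ Per α, ∀ y ∈ Per α, ∃ k, α^[k] x = y)
    (normA : (Fin n → Fin n) → ℝ)
    (hnormA : ∀ α, normA α = if single α then ((Per α).card : ℝ) else 0)
    (eT : Fin n → ℝ)
    (heT : ∀ i, eT i = ∑ τ : Fin n → Fin n,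
      if (τ i = i ∧ ∀ j, ∃ k, τ^[k] j = i)
        then ∏ j ∈ Finset.univ.erase i, M j (τ j) else 0) :
    ∑ k, eT k = ∑ α : Fin n → Fin n, Q α * normA α := by
  simp_rw [heT, aux_tree M hM1]
  rw [Finset.sum_comm]
  refine Finset.sum_congr rfl fun α _ => ?_
  rw [hnormA, hQ, ← Finset.sum_filter, Finset.sum_const, nsmul_eq_mul, mul_comm]
  congr 1
  have hmem : ∀ x, x ∈ Per α ↔ ∃ k, 1 ≤ k ∧ α^[k] x = x := by
    intro x
    rw [hPer]
    simp
  by_cases hs : single α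
  · rw [if_pos hs]
    congr 2
    ext i
    rw [hmem]
    simp only [mem_filter, mem_univ, true_and]
    refine ⟨aux_per α i, fun hi j => ?_⟩
    obtain ⟨m, hm⟩ := aux_event α j
    obtain ⟨k, hk⟩ := (hsingle α).1 hs _ ((hmem _).2 hm) i ((hmem _).2 hi)
    exact ⟨k + m, by rw [Function.iterate_add_apply, hk]⟩
  · rw [if_neg hs]
    rw [Nat.cast_eq_zero, Finset.card_eq_zero, Finset.filter_eq_empty_iff]
    intro i _ hi
    apply hs
    rw [hsingle]
    intro x _ y hy
    obtain ⟨a, ha⟩ := hi x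
    obtain ⟨b, hb⟩ := aux_back α i y (hi y) ((hmem _).1 hy)
    exact ⟨b + a, by rw [Function.iterate_add_apply, ha, hb]⟩
end

section
/- Let M be an irreducible n×n row-stochastic matrix with stationary distribution π, and let Q be the maximum entropy RDS measure on maps α : {1,…,n} → {1,…,n}, Q(α) = Π_i M_{i, α(i)}. Then for every pair of states i, j, Σ_{cycles c = (S,σ) with i ∈ S and σ(i) = j} w_c = π_i M_{ij}, where w_c = Q(α : A(α) = c) / E_Q[‖A(α)‖]; equivalently, Q(α : α has a single attractor, i ∈ Per(α) and α(i) = j) = π_i M_{ij} · E_Q[‖A(α)‖]. -/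
open Finset
open scoped Classical

def RDSReach {n : ℕ} (α : Fin n → Fin n) (i : Fin n) : Prop := ∀ x, ∃ k, α^[k] x = i

lemma RDSReach.periodic {n : ℕ} {α : Fin n → Fin n} {i : Fin n} (h : RDSReach α i) :
    i ∈ Function.periodicPts α := by
  obtain ⟨k, hk⟩ := h (α i)
  exact Function.mem_periodicPts.2 ⟨k + 1, Nat.succ_pos k, by
    simpa [Function.IsPeriodicPt, Function.IsFixedPt, Function.iterate_succ_apply] using hk⟩

lemma RDSReach.of_reach {n : ℕ} {α : Fin n → Fin n} {i j : Fin n} (h : RDSReach α i)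
    (k : ℕ) (hk : α^[k] i = j) : RDSReach α j := by
  intro x
  obtain ⟨m, hm⟩ := h x
  exact ⟨k + m, by rw [Function.iterate_add_apply, hm, hk]⟩

lemma RDSReach.update {n : ℕ} {α : Fin n → Fin n} {i : Fin n} (h : RDSReach α i) (j : Fin n) :
    RDSReach (Function.update α i j) i := by
  intro x
  obtain ⟨k, hk⟩ := h x
  induction k generalizing x with
  | zero => exact ⟨0, hk⟩
  | succ k ih =>
    by_cases hx : x = i
    · exact ⟨0, hx⟩
    · obtain ⟨m, hm⟩ := ih (α x) (by simpa [Function.iterate_succ_apply] using hk)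
      exact ⟨m + 1, by rw [Function.iterate_succ_apply, Function.update_of_ne hx, hm]⟩

lemma RDS_eventually {n : ℕ} (α : Fin n → Fin n) (x : Fin n) :
    ∃ m, α^[m] x ∈ Function.periodicPts α := by
  obtain ⟨a, b, hab, h⟩ := Finite.exists_ne_map_eq_of_infinite (fun m : ℕ => α^[m] x)
  wlog hlt : a < b generalizing a b
  · exact this b a hab.symm h.symm (by omega)
  refine ⟨a, Function.mem_periodicPts.2 ⟨b - a, by omega, ?_⟩⟩
  rw [Function.IsPeriodicPt, Function.IsFixedPt, ← Function.iterate_add_apply, h]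
  congr 2
  omega

lemma RDSReach_iff {n : ℕ} (α : Fin n → Fin n) (i : Fin n) :
    RDSReach α i ↔ i ∈ Function.periodicPts α ∧
      ∀ x ∈ Function.periodicPts α, ∀ y ∈ Function.periodicPts α, ∃ k, α^[k] x = y := by
  constructor
  · intro h
    refine ⟨h.periodic, fun x _ y hy => ?_⟩
    obtain ⟨a, ha⟩ := h x
    obtain ⟨b, hb⟩ := h y
    obtain ⟨p, hp, hpy⟩ := Function.mem_periodicPts.1 hy
    have h1 : Function.IsPeriodicPt α (p * b) y := hpy.mul_const b
    refine ⟨(p * b - b) + a, ?_⟩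
    rw [Function.iterate_add_apply, ha, ← hb, ← Function.iterate_add_apply,
      Nat.sub_add_cancel (Nat.le_mul_of_pos_left b hp)]
    exact h1
  · rintro ⟨hi, h⟩ x
    obtain ⟨m, hm⟩ := RDS_eventually α x
    obtain ⟨k, hk⟩ := h _ hm i hi
    exact ⟨k + m, by rw [Function.iterate_add_apply, hk]⟩

lemma RDSReach_pred {n : ℕ} (α : Fin n → Fin n) (j : Fin n) (h : RDSReach α j) :
    ∃ i, ∀ x, (RDSReach α x ∧ α x = j) ↔ x = i := by
  obtain ⟨k, hk⟩ := h (α j)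
  have h1 : α (α^[k] j) = j := by
    rw [← Function.iterate_succ_apply' α, Function.iterate_succ_apply, hk]
  have h2 : RDSReach α (α^[k] j) := h.of_reach k rfl
  refine ⟨α^[k] j, fun x => ⟨?_, ?_⟩⟩
  · rintro ⟨hx, hxj⟩
    exact (Function.bijOn_periodicPts α).injOn hx.periodic h2.periodic (hxj.trans h1.symm)
  · rintro rfl
    exact ⟨h2, h1⟩

/-- Weight of maps for which every point reaches `i`. -/
noncomputable def RDSW {n : ℕ} (M : Matrix (Fin n) (Fin n) ℝ) (i : Fin n) : ℝ :=
  ∑ α : Fin n → Fin n, if RDSReach α i then ∏ x, M x (α x) else 0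

noncomputable def RDSF {n : ℕ} (M : Matrix (Fin n) (Fin n) ℝ) (i j : Fin n) : ℝ :=
  ∑ α : Fin n → Fin n, if RDSReach α i ∧ α i = j then ∏ x, M x (α x) else 0

lemma RDSF_row {n : ℕ} (M : Matrix (Fin n) (Fin n) ℝ) (i : Fin n) :
    ∑ j, RDSF M i j = RDSW M i := by
  unfold RDSF RDSW
  rw [Finset.sum_comm]
  refine Finset.sum_congr rfl fun α _ => ?_
  by_cases h : RDSReach α i <;> simp [h]

lemma RDSF_col {n : ℕ} (M : Matrix (Fin n) (Fin n) ℝ) (j : Fin n) :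
    ∑ i, RDSF M i j = RDSW M j := by
  unfold RDSF RDSW
  rw [Finset.sum_comm]
  refine Finset.sum_congr rfl fun α _ => ?_
  by_cases h : RDSReach α j
  · obtain ⟨i, hi⟩ := RDSReach_pred α j h
    simp [h, hi]
  · rw [if_neg h]
    refine Finset.sum_eq_zero fun i _ => if_neg ?_
    rintro ⟨h1, h2⟩
    exact h (h1.of_reach 1 h2)

lemma RDS_prod_update {n : ℕ} (M : Matrix (Fin n) (Fin n) ℝ) (α : Fin n → Fin n) (i j : Fin n) :
    (∏ x, M x (Function.update α i j x)) * M i (α i) = (∏ x, M x (α x)) * M i j := by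
  rw [← Finset.mul_prod_erase univ (fun x => M x (α x)) (Finset.mem_univ i),
    ← Finset.mul_prod_erase univ (fun x => M x (Function.update α i j x)) (Finset.mem_univ i)]
  have : ∏ x ∈ univ.erase i, M x (Function.update α i j x) = ∏ x ∈ univ.erase i, M x (α x) := by
    refine Finset.prod_congr rfl fun x hx => ?_
    rw [Function.update_of_ne (Finset.ne_of_mem_erase hx)]
  rw [this, Function.update_self]
  ring

lemma RDSF_swap {n : ℕ} (M : Matrix (Fin n) (Fin n) ℝ) (i j j' : Fin n) :
    RDSF M i j * M i j' = RDSF M i j' * M i j := by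
  unfold RDSF
  rw [← Finset.sum_filter, ← Finset.sum_filter, Finset.sum_mul, Finset.sum_mul]
  refine Finset.sum_nbij' (fun α => Function.update α i j') (fun α => Function.update α i j)
    ?_ ?_ ?_ ?_ ?_
  · intro α hα
    simp only [Finset.mem_filter, Finset.mem_univ, true_and] at hα ⊢
    exact ⟨hα.1.update _, by simp⟩
  · intro α hα
    simp only [Finset.mem_filter, Finset.mem_univ, true_and] at hα ⊢
    exact ⟨hα.1.update _, by simp⟩
  · intro α hα
    simp only [Finset.mem_filter, Finset.mem_univ, true_and] at hα
    rw [← hα.2]; simp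
  · intro α hα
    simp only [Finset.mem_filter, Finset.mem_univ, true_and] at hα
    rw [← hα.2]; simp
  · intro α hα
    simp only [Finset.mem_filter, Finset.mem_univ, true_and] at hα
    rw [← RDS_prod_update, hα.2]

lemma RDSF_eq {n : ℕ} (M : Matrix (Fin n) (Fin n) ℝ) (hM1 : ∀ i, ∑ j, M i j = 1)
    (i j : Fin n) : RDSF M i j = RDSW M i * M i j := by
  rw [← RDSF_row, Finset.sum_mul, Finset.sum_congr rfl fun j' _ => RDSF_swap M i j' j,
    ← Finset.mul_sum, hM1, mul_one]

lemma RDS_spread {n : ℕ} (M : Matrix (Fin n) (Fin n) ℝ) (hM0 : ∀ i j, 0 ≤ M i j)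
    (hirr : ∀ i j, ∃ k, 1 ≤ k ∧ 0 < (M ^ k) i j) (u : Fin n → ℝ) (hu : ∀ i, 0 ≤ u i)
    (hs : ∀ j, ∑ i, u i * M i j = u j) (i : Fin n) (hi : 0 < u i) (j : Fin n) : 0 < u j := by
  have hk0 : ∀ k a b, 0 ≤ (M ^ k) a b := by
    intro k
    induction k with
    | zero => intro a b; rw [pow_zero, Matrix.one_apply]; split_ifs <;> norm_num
    | succ k ih =>
      intro a b
      rw [pow_succ, Matrix.mul_apply]
      exact Finset.sum_nonneg fun c _ => mul_nonneg (ih a c) (hM0 c b)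
  have hv : Matrix.vecMul u M = u := by
    ext j; exact hs j
  have hvk : ∀ k, Matrix.vecMul u (M ^ k) = u := by
    intro k
    induction k with
    | zero => simp
    | succ k ih => rw [pow_succ, ← Matrix.vecMul_vecMul, ih, hv]
  obtain ⟨k, _, hk⟩ := hirr i j
  have h2 : ∑ a, u a * (M ^ k) a j = u j := congrFun (hvk k) j
  rw [← h2]
  exact Finset.sum_pos' (fun a _ => mul_nonneg (hu a) (hk0 k a j))
    ⟨i, Finset.mem_univ i, mul_pos hi hk⟩

lemma RDSW_pos {n : ℕ} (M : Matrix (Fin n) (Fin n) ℝ) (hM0 : ∀ i j, 0 ≤ M i j)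
    (hM1 : ∀ i, ∑ j, M i j = 1)
    (hirr : ∀ i j, ∃ k, 1 ≤ k ∧ 0 < (M ^ k) i j) (i : Fin n) : 0 < RDSW M i := by
  have hex : ∀ x, ∃ k, 0 < (M ^ k) x i := fun x => (hirr x i).imp fun k h => h.2
  have hstep : ∀ x, ∃ y, 0 < M x y ∧ (x ≠ i → Nat.find (hex y) < Nat.find (hex x)) := by
    intro x
    by_cases hx : x = i
    · by_contra! hc
      have h1 : ∑ j, M x j ≤ 0 := Finset.sum_nonpos fun j _ => by
        by_contra! hj
        exact (hc j hj).1 hx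
      rw [hM1] at h1
      linarith
    · have hf := Nat.find_spec (hex x)
      rcases hk : Nat.find (hex x) with _ | k
      · rw [hk, pow_zero, Matrix.one_apply_ne hx] at hf
        exact absurd hf (lt_irrefl _)
      · rw [hk, pow_succ', Matrix.mul_apply] at hf
        obtain ⟨y, -, hy⟩ := Finset.exists_lt_of_sum_lt
          (f := fun _ : Fin n => (0:ℝ)) (by simpa using hf)
        have hMy : 0 < M x y := by
          rcases (hM0 x y).lt_or_eq with h | h
          · exact h
          · rw [← h] at hy; simp at hy
        refine ⟨y, hMy, fun _ => ?_⟩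
        have : 0 < (M ^ k) y i := pos_of_mul_pos_right hy hMy.le
        exact Nat.lt_succ_of_le (Nat.find_min' _ this)
  choose α hα1 hα2 using hstep
  have hr : RDSReach α i := by
    intro x
    induction hd : Nat.find (hex x) using Nat.strong_induction_on generalizing x with
    | _ d ih =>
      by_cases hx : x = i
      · exact ⟨0, hx⟩
      · obtain ⟨k, hk⟩ := ih _ (hd ▸ hα2 x hx) (α x) rfl
        exact ⟨k + 1, by rw [Function.iterate_succ_apply, hk]⟩
  refine Finset.sum_pos' (fun β _ => ?_) ⟨α, Finset.mem_univ _, ?_⟩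
  · split_ifs
    · exact Finset.prod_nonneg fun x _ => hM0 _ _
    · exact le_rfl
  · rw [if_pos hr]
    exact Finset.prod_pos fun x _ => hα1 x

lemma RDSW_eq {n : ℕ} (M : Matrix (Fin n) (Fin n) ℝ) (hM0 : ∀ i j, 0 ≤ M i j)
    (hM1 : ∀ i, ∑ j, M i j = 1)
    (hirr : ∀ i j, ∃ k, 1 ≤ k ∧ 0 < (M ^ k) i j)
    (π : Fin n → ℝ) (hπ0 : ∀ i, 0 ≤ π i) (hπ1 : ∑ i, π i = 1)
    (hπstat : ∀ j, ∑ i, π i * M i j = π j) (i : Fin n) :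
    RDSW M i = π i * ∑ x, RDSW M x := by
  have hWs : ∀ j, ∑ i, RDSW M i * M i j = RDSW M j := by
    intro j
    rw [← RDSF_col]
    exact Finset.sum_congr rfl fun i _ => (RDSF_eq M hM1 i j).symm
  have hπp : ∀ j, 0 < π j := by
    have : ∃ x, 0 < π x := by
      by_contra! hc
      have := Finset.sum_nonpos fun x (_ : x ∈ (univ : Finset (Fin n))) => hc x
      linarith
    obtain ⟨x, hx⟩ := this
    exact RDS_spread M hM0 hirr π hπ0 hπstat x hx
  obtain ⟨m, -, hm⟩ := Finset.exists_min_image univ (fun x => RDSW M x / π x)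
    ⟨i, Finset.mem_univ i⟩
  set c := RDSW M m / π m with hc
  have hu0 : ∀ x, 0 ≤ RDSW M x - c * π x := by
    intro x
    have := (le_div_iff₀ (hπp x)).1 (hm x (Finset.mem_univ x))
    linarith
  have hum : RDSW M m - c * π m = 0 := by
    rw [hc, div_mul_cancel₀ _ (hπp m).ne', sub_self]
  have hus : ∀ j, ∑ i, (RDSW M i - c * π i) * M i j = RDSW M j - c * π j := by
    intro j
    simp_rw [sub_mul, mul_assoc, Finset.sum_sub_distrib, ← Finset.mul_sum, hWs, hπstat]
  have hz : ∀ x, RDSW M x = c * π x := by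
    intro x
    rcases (hu0 x).lt_or_eq with h | h
    · have := RDS_spread M hM0 hirr _ hu0 hus x h m
      linarith
    · linarith
  simp_rw [hz, ← Finset.mul_sum, hπ1]
  ring

lemma RDS_perm {n : ℕ} (α : Fin n → Fin n) : ∃ σ : Equiv.Perm (Fin n),
    (∀ x ∈ Function.periodicPts α, σ x = α x) ∧ ∀ x ∉ Function.periodicPts α, σ x = x := by
  let f : Fin n → Fin n := fun x => if x ∈ Function.periodicPts α then α x else x
  have hb := Function.bijOn_periodicPts α
  have hf : Function.Injective f := by
    intro x y hxy
    by_cases hx : x ∈ Function.periodicPts α <;> by_cases hy : y ∈ Function.periodicPts α <;>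
      simp only [f, hx, hy, if_true, if_false] at hxy
    · exact hb.injOn hx hy hxy
    · exact absurd (hxy ▸ hb.mapsTo hx) hy
    · exact absurd (hxy ▸ hb.mapsTo hy) hx
    · exact hxy
  refine ⟨Equiv.ofBijective f (Finite.injective_iff_bijective.1 hf), ?_, ?_⟩
  · intro x hx; simp [f, hx]
  · intro x hx; simp [f, hx]

/-- Cycle weights recover the stationary fluxes: for every pair of states i, j,
Σ_{cycles c = (S,σ), i ∈ S, σ(i) = j} w_c = π_i M_{ij}, where
w_c = Q(α : A(α)=c)/E_Q[‖A(α)‖]; equivalently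
Q(α single attractor ∧ i ∈ Per α ∧ α(i) = j) = π_i M_{ij} · E_Q[‖A(α)‖]. -/
theorem cycle_weights_give_stationary_flux (n : ℕ)
    (M : Matrix (Fin n) (Fin n) ℝ)
    (hM0 : ∀ i j, 0 ≤ M i j) (hM1 : ∀ i, ∑ j, M i j = 1)
    (hirr : ∀ i j, ∃ k, 1 ≤ k ∧ 0 < (M ^ k) i j)
    (π : Fin n → ℝ) (hπ0 : ∀ i, 0 ≤ π i) (hπ1 : ∑ i, π i = 1)
    (hπstat : ∀ j, ∑ i, π i * M i j = π j)
    (Q : (Fin n → Fin n) → ℝ) (hQ : ∀ α, Q α = ∏ i, M i (α i))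
    (Per : (Fin n → Fin n) → Finset (Fin n))
    (hPer : ∀ α, Per α = Finset.univ.filter fun x => ∃ k, 1 ≤ k ∧ α^[k] x = x)
    (single : (Fin n → Fin n) → Prop)
    (hsingle : ∀ α, single α ↔ ∀ x ∈ Per α, ∀ y ∈ Per α, ∃ k, α^[k] x = y)
    (normA : (Fin n → Fin n) → ℝ)
    (hnormA : ∀ α, normA α = if single α then ((Per α).card : ℝ) else 0)
    (EQ : ℝ) (hEQ : EQ = ∑ α : Fin n → Fin n, Q α * normA α)
    (wc : Finset (Fin n) → Equiv.Perm (Fin n) → ℝ)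
    (hwc : ∀ S σ, wc S σ =
      (∑ α : Fin n → Fin n, if (Per α = S ∧ ∀ x ∈ S, α x = σ x) then Q α else 0) / EQ)
    (i j : Fin n) :
    (∑ S : Finset (Fin n), ∑ σ : Equiv.Perm (Fin n),
      if (S.Nonempty ∧ (∀ x ∉ S, σ x = x) ∧
          (∀ x ∈ S, ∀ y ∈ S, ∃ k, (⇑σ)^[k] x = y) ∧ i ∈ S ∧ σ i = j)
        then wc S σ else 0) = π i * M i j ∧
    (∑ α : Fin n → Fin n, if (single α ∧ i ∈ Per α ∧ α i = j) then Q α else 0)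
      = π i * M i j * EQ := by
  have hP : ∀ α x, x ∈ Per α ↔ x ∈ Function.periodicPts α := by
    intro α x
    rw [hPer]
    simp only [Finset.mem_filter, Finset.mem_univ, true_and]
    rfl
  have hR : ∀ α x, (single α ∧ x ∈ Per α) ↔ RDSReach α x := by
    intro α x
    rw [RDSReach_iff, hsingle, and_comm]
    simp only [hP]
  have hEW : EQ = ∑ x, RDSW M x := by
    rw [hEQ]
    unfold RDSW
    rw [Finset.sum_comm]
    refine Finset.sum_congr rfl fun α _ => ?_
    rw [hnormA, ← hQ]
    simp only [← hR]
    by_cases hs : single α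
    · simp [hs, mul_comm]
    · simp [hs]
  have hpos : 0 < EQ := by
    rw [hEW]
    exact Finset.sum_pos (fun x _ => RDSW_pos M hM0 hM1 hirr x) ⟨i, Finset.mem_univ i⟩
  have h2 : (∑ α : Fin n → Fin n, if (single α ∧ i ∈ Per α ∧ α i = j) then Q α else 0)
      = π i * M i j * EQ := by
    have h3 := RDSF_eq M hM1 i j
    rw [RDSW_eq M hM0 hM1 hirr π hπ0 hπ1 hπstat i, ← hEW] at h3
    have h4 : π i * M i j * EQ = π i * EQ * M i j := by ring
    rw [h4, ← h3]
    unfold RDSF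
    refine Finset.sum_congr rfl fun α _ => ?_
    simp only [← and_assoc, hR, hQ]
  refine ⟨?_, h2⟩
  rw [← mul_div_cancel_right₀ (π i * M i j) hpos.ne', ← h2, Finset.sum_div]
  have h5 : ∀ (S : Finset (Fin n)) (σ : Equiv.Perm (Fin n)),
      (if (S.Nonempty ∧ (∀ x ∉ S, σ x = x) ∧
          (∀ x ∈ S, ∀ y ∈ S, ∃ k, (⇑σ)^[k] x = y) ∧ i ∈ S ∧ σ i = j)
        then wc S σ else 0) = ∑ α : Fin n → Fin n,
        if ((S.Nonempty ∧ (∀ x ∉ S, σ x = x) ∧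
          (∀ x ∈ S, ∀ y ∈ S, ∃ k, (⇑σ)^[k] x = y) ∧ i ∈ S ∧ σ i = j) ∧
          (Per α = S ∧ ∀ x ∈ S, α x = σ x)) then Q α / EQ else 0 := by
    intro S σ
    rw [hwc, Finset.sum_div]
    split_ifs with hc
    · refine Finset.sum_congr rfl fun α _ => ?_
      by_cases hd : Per α = S ∧ ∀ x ∈ S, α x = σ x
      · rw [if_pos hd, if_pos ⟨hc, hd⟩]
      · rw [if_neg hd, if_neg fun h => hd h.2, zero_div]
    · symm
      exact Finset.sum_eq_zero fun α _ => if_neg fun h => hc h.1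
  simp_rw [h5]
  rw [Finset.sum_congr rfl fun S _ => Finset.sum_comm, Finset.sum_comm]
  refine Finset.sum_congr rfl fun α _ => ?_
  have hmaps : ∀ x ∈ Per α, α x ∈ Per α := fun x hx =>
    (hP α _).2 ((Function.bijOn_periodicPts α).mapsTo ((hP α x).1 hx))
  have hiter : ∀ σ : Equiv.Perm (Fin n), (∀ x ∈ Per α, α x = σ x) →
      ∀ k, ∀ x ∈ Per α, (⇑σ)^[k] x = α^[k] x := by
    intro σ hσ k
    induction k with
    | zero => intro x _; rfl
    | succ k ih =>
      intro x hx
      rw [Function.iterate_succ_apply, Function.iterate_succ_apply, ← hσ x hx, ih _ (hmaps x hx)]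
  by_cases hα : single α ∧ i ∈ Per α ∧ α i = j
  · rw [if_pos hα]
    obtain ⟨hs, hi, hj⟩ := hα
    obtain ⟨τ, hτ1, hτ2⟩ := RDS_perm α
    have ha : ∀ x ∈ Per α, α x = τ x := fun x hx => (hτ1 x ((hP α x).1 hx)).symm
    rw [Finset.sum_eq_single (Per α), Finset.sum_eq_single τ]
    · rw [if_pos]
      refine ⟨⟨⟨i, hi⟩, fun x hx => hτ2 x (fun h => hx ((hP α x).2 h)), ?_, hi, ?_⟩, rfl, ha⟩
      · intro x hx y hy
        obtain ⟨k, hk⟩ := (hsingle α).1 hs x hx y hy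
        exact ⟨k, by rw [hiter τ ha k x hx, hk]⟩
      · rw [← ha i hi, hj]
    · intro σ _ hne
      refine if_neg ?_
      rintro ⟨⟨-, hout, -⟩, -, hin⟩
      apply hne
      ext x
      by_cases hx : x ∈ Per α
      · rw [← hin x hx, ← ha x hx]
      · rw [hout x hx, hτ2 x (fun h => hx ((hP α x).2 h))]
    · intro h; exact absurd (Finset.mem_univ _) h
    · intro S _ hne
      exact Finset.sum_eq_zero fun σ _ => if_neg fun h => hne h.2.1.symm
    · intro h; exact absurd (Finset.mem_univ _) h
  · rw [if_neg hα, zero_div]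
    refine Finset.sum_eq_zero fun S _ => Finset.sum_eq_zero fun σ _ => if_neg ?_
    rintro ⟨⟨-, -, hcyc, hi, hj⟩, rfl, hin⟩
    refine hα ⟨(hsingle α).2 fun x hx y hy => ?_, hi, by rw [hin i hi, hj]⟩
    obtain ⟨k, hk⟩ := hcyc x hx y hy
    exact ⟨k, by rw [← hiter σ hin k x hx, hk]⟩
end

section
/- Let M be an irreducible n×n row-stochastic matrix with stationary distribution π, satisfying M_{ij} > 0 ⟺ M_{ji} > 0 for all i, j, and let Q be the maximum entropy RDS measure, Q(α) = Π_i M_{i, α(i)}. For a cycle c = (S, σ) let c_- = (S, σ^{-1}) denote its reversal and w_c = Q(α : A(α) = c) / E_Q[‖A(α)‖]. Then the stationary entropy production rate has the cycle representation: Σ_{(i,j): M_{ij}>0} π_i M_{ij} log( M_{ij} / M_{ji} ) = Σ_{cycles c with w_c > 0} w_c log( w_c / w_{c_-} ). -/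
open Finset
open scoped Classical

namespace EPC
variable {n : ℕ}

noncomputable def PP (α : Fin n → Fin n) : Finset (Fin n) :=
  Finset.univ.filter fun x => ∃ k, 1 ≤ k ∧ α^[k] x = x

def rch (S : Finset (Fin n)) (α : Fin n → Fin n) : Prop := ∀ x, ∃ k, α^[k] x ∈ S

def sgl (α : Fin n → Fin n) : Prop := ∀ x ∈ PP α, ∀ y ∈ PP α, ∃ k, α^[k] x = y

def vld (S : Finset (Fin n)) (σ : Equiv.Perm (Fin n)) : Prop :=
  S.Nonempty ∧ (∀ x ∉ S, σ x = x) ∧ (∀ x ∈ S, ∀ y ∈ S, ∃ k, (⇑σ)^[k] x = y)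

lemma mem_PP {α : Fin n → Fin n} {x} : x ∈ PP α ↔ ∃ k, 1 ≤ k ∧ α^[k] x = x := by
  simp [PP]

lemma coe_PP (α : Fin n → Fin n) : (PP α : Set (Fin n)) = Function.periodicPts α := by
  ext x
  simp only [Finset.mem_coe, mem_PP, Function.mem_periodicPts]
  rfl

lemma PP_step {α : Fin n → Fin n} {x} (h : x ∈ PP α) : α x ∈ PP α := by
  obtain ⟨k, hk, h⟩ := mem_PP.1 h
  refine mem_PP.2 ⟨k, hk, ?_⟩
  rw [← Function.iterate_succ_apply, Function.iterate_succ_apply', h]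

lemma inv_iter {α : Fin n → Fin n} {S : Finset (Fin n)} (hS : ∀ x ∈ S, α x ∈ S) (k : ℕ) :
    ∀ x ∈ S, α^[k] x ∈ S := by
  induction k with
  | zero => intro x hx; simpa
  | succ k ih => intro x hx; rw [Function.iterate_succ_apply]; exact ih _ (hS x hx)

lemma reach_PP (α : Fin n → Fin n) : rch (PP α) α := by
  intro x
  obtain ⟨a, b, hne, h⟩ := Finite.exists_ne_map_eq_of_infinite (fun k : ℕ => α^[k] x)
  wlog hab : a < b generalizing a b
  · exact this b a hne.symm h.symm (by omega)
  refine ⟨a, mem_PP.2 ⟨b - a, by omega, ?_⟩⟩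
  rw [← Function.iterate_add_apply, h]
  congr 2
  omega

lemma PP_ret {α : Fin n → Fin n} {x} (h : x ∈ PP α) (k : ℕ) : ∃ m, α^[m] (α^[k] x) = x := by
  obtain ⟨p, hp, h⟩ := mem_PP.1 h
  refine ⟨k * (p - 1), ?_⟩
  rw [← Function.iterate_add_apply]
  have : k * (p - 1) + k = p * k := by
    obtain ⟨q, rfl⟩ := Nat.exists_eq_add_of_le hp
    simp; ring
  rw [this]
  exact Function.IsPeriodicPt.mul_const (show Function.IsPeriodicPt α p x from h) k

lemma sgl_iff (α : Fin n → Fin n) (i : Fin n) : (sgl α ∧ i ∈ PP α) ↔ rch {i} α := by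
  constructor
  · rintro ⟨h, hi⟩ x
    obtain ⟨k, hk⟩ := reach_PP α x
    obtain ⟨m, hm⟩ := h _ hk _ hi
    exact ⟨m + k, by rw [Function.iterate_add_apply, hm]; simp⟩
  · intro h
    refine ⟨fun x hx y hy => ?_, ?_⟩
    · obtain ⟨k, hk⟩ := h x
      obtain ⟨m, hm⟩ := h y
      rw [Finset.mem_singleton] at hk hm
      obtain ⟨q, hq⟩ := PP_ret hy m
      exact ⟨q + k, by rw [Function.iterate_add_apply, hk, ← hm, hq]⟩
    · obtain ⟨k, hk⟩ := h (α i)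
      rw [Finset.mem_singleton] at hk
      exact mem_PP.2 ⟨k + 1, by omega, by rw [Function.iterate_succ_apply, hk]⟩

lemma vld_mem {S : Finset (Fin n)} {σ : Equiv.Perm (Fin n)} (h : vld S σ) {x} (hx : x ∈ S) :
    σ x ∈ S := by
  by_contra hc
  have := h.2.1 _ hc
  have := σ.injective this
  rw [this] at hc
  exact hc hx

lemma iter_eq {S : Finset (Fin n)} {α β : Fin n → Fin n} (hS : ∀ x ∈ S, β x ∈ S)
    (h : ∀ x ∈ S, α x = β x) (k : ℕ) : ∀ x ∈ S, α^[k] x = β^[k] x := by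
  induction k with
  | zero => intro x hx; rfl
  | succ k ih =>
    intro x hx
    rw [Function.iterate_succ_apply, Function.iterate_succ_apply, h x hx, ih _ (hS x hx)]

lemma cyc_iff {S : Finset (Fin n)} {σ : Equiv.Perm (Fin n)} (hv : vld S σ) (α : Fin n → Fin n) :
    (PP α = S ∧ ∀ x ∈ S, α x = σ x) ↔ ((∀ x ∈ S, α x = σ x) ∧ rch S α) := by
  constructor
  · rintro ⟨h1, h2⟩
    exact ⟨h2, h1 ▸ reach_PP α⟩
  · rintro ⟨h1, h2⟩
    refine ⟨?_, h1⟩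
    have hσ : ∀ x ∈ S, σ x ∈ S := fun x hx => vld_mem hv hx
    have hα : ∀ x ∈ S, α x ∈ S := fun x hx => by rw [h1 x hx]; exact hσ x hx
    ext x
    constructor
    · intro hx
      obtain ⟨k, hk⟩ := h2 x
      obtain ⟨m, hm⟩ := PP_ret hx k
      rw [← hm]
      exact inv_iter hα m _ hk
    · intro hx
      obtain ⟨k, hk⟩ := hv.2.2 _ (hσ x hx) x hx
      refine mem_PP.2 ⟨k + 1, by omega, ?_⟩
      rw [Function.iterate_succ_apply, h1 x hx, iter_eq hσ h1 k _ (hσ x hx), hk]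

lemma vld_inv {S : Finset (Fin n)} {σ : Equiv.Perm (Fin n)} (hv : vld S σ) : vld S σ⁻¹ := by
  refine ⟨hv.1, fun x hx => ?_, fun x hx y hy => ?_⟩
  · rw [Equiv.Perm.inv_eq_iff_eq, hv.2.1 x hx]
  · obtain ⟨k, hk⟩ := hv.2.2 y hy x hx
    refine ⟨k, ?_⟩
    rw [← hk]
    exact (Function.LeftInverse.iterate (f := σ) (g := ⇑σ⁻¹) (fun z => by simp) k) y

lemma rch_congr {S : Finset (Fin n)} {α β : Fin n → Fin n} (h : ∀ x ∉ S, α x = β x)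
    (hα : rch S α) : rch S β := by
  have key : ∀ k x, α^[k] x ∈ S → ∃ m, β^[m] x ∈ S := by
    intro k
    induction k with
    | zero => intro x hx; exact ⟨0, hx⟩
    | succ k ih =>
      intro x hx
      by_cases hxS : x ∈ S
      · exact ⟨0, hxS⟩
      · rw [Function.iterate_succ_apply, h x hxS] at hx
        obtain ⟨m, hm⟩ := ih _ hx
        exact ⟨m + 1, hm⟩
  intro x
  obtain ⟨k, hk⟩ := hα x
  exact key k x hk

noncomputable def G (M : Matrix (Fin n) (Fin n) ℝ) (S : Finset (Fin n)) (τ : Fin n → Fin n) : ℝ :=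
  ∑ α : Fin n → Fin n, if ((∀ x ∈ S, α x = τ x) ∧ rch S α) then ∏ x, M x (α x) else 0

noncomputable def H (M : Matrix (Fin n) (Fin n) ℝ) (S : Finset (Fin n)) (τ : Fin n → Fin n) : ℝ :=
  ∑ α : Fin n → Fin n, if ((∀ x ∈ S, α x = τ x) ∧ rch S α) then ∏ x ∈ Sᶜ, M x (α x) else 0

lemma G_eq (M : Matrix (Fin n) (Fin n) ℝ) (S : Finset (Fin n)) (τ : Fin n → Fin n) :
    G M S τ = (∏ x ∈ S, M x (τ x)) * H M S τ := by
  unfold G H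
  rw [Finset.mul_sum]
  refine Finset.sum_congr rfl fun α _ => ?_
  split_ifs with h
  · rw [← Finset.prod_mul_prod_compl S]
    congr 1
    exact Finset.prod_congr rfl fun x hx => by rw [h.1 x hx]
  · simp

lemma H_eq (M : Matrix (Fin n) (Fin n) ℝ) (S : Finset (Fin n)) (τ τ' : Fin n → Fin n) :
    H M S τ = H M S τ' := by
  unfold H
  rw [← Finset.sum_filter, ← Finset.sum_filter]
  refine Finset.sum_nbij' (fun α => S.piecewise τ' α) (fun α => S.piecewise τ α) ?_ ?_ ?_ ?_ ?_
  · intro α h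
    simp only [Finset.mem_filter, Finset.mem_univ, true_and] at h ⊢
    exact ⟨fun x hx => by simp [hx], rch_congr (fun x hx => by simp [hx]) h.2⟩
  · intro α h
    simp only [Finset.mem_filter, Finset.mem_univ, true_and] at h ⊢
    exact ⟨fun x hx => by simp [hx], rch_congr (fun x hx => by simp [hx]) h.2⟩
  · intro α h
    simp only [Finset.mem_filter, Finset.mem_univ, true_and] at h
    ext x : 1
    by_cases hx : x ∈ S <;> simp [hx, h.1]
  · intro α h
    simp only [Finset.mem_filter, Finset.mem_univ, true_and] at h
    ext x : 1
    by_cases hx : x ∈ S <;> simp [hx, h.1]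
  · intro α h
    refine Finset.prod_congr rfl fun x hx => ?_
    rw [Finset.mem_compl] at hx
    simp [hx]

/-- uniqueness of stationary vectors up to scaling -/
lemma stat_pos (M : Matrix (Fin n) (Fin n) ℝ) (hM0 : ∀ i j, 0 ≤ M i j)
    (hirr : ∀ i j, ∃ k, 1 ≤ k ∧ 0 < (M ^ k) i j) (μ : Fin n → ℝ) (h0 : ∀ i, 0 ≤ μ i)
    (hst : ∀ j, ∑ i, μ i * M i j = μ j) (i : Fin n) (hi : 0 < μ i) (j : Fin n) : 0 < μ j := by
  have hp : ∀ k i j, 0 ≤ (M ^ k) i j := by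
    intro k
    induction k with
    | zero => intro i j; rw [pow_zero, Matrix.one_apply]; split_ifs <;> norm_num
    | succ k ih =>
      intro i j
      rw [pow_succ, Matrix.mul_apply]
      exact Finset.sum_nonneg fun l _ => mul_nonneg (ih _ _) (hM0 _ _)
  have hs : ∀ k j, ∑ i, μ i * (M ^ k) i j = μ j := by
    intro k
    induction k with
    | zero => intro j; simp [Matrix.one_apply]
    | succ k ih =>
      intro j
      simp only [pow_succ, Matrix.mul_apply, Finset.mul_sum]
      rw [Finset.sum_comm, ← hst j]
      refine Finset.sum_congr rfl fun l _ => ?_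
      rw [← ih l, Finset.sum_mul]
      exact Finset.sum_congr rfl fun _ _ => by ring
  obtain ⟨k, -, hk⟩ := hirr i j
  rw [← hs k j]
  exact Finset.sum_pos' (fun l _ => mul_nonneg (h0 l) (hp _ _ _)) ⟨i, Finset.mem_univ _, mul_pos hi hk⟩

lemma stat_unique (M : Matrix (Fin n) (Fin n) ℝ) (hM0 : ∀ i j, 0 ≤ M i j)
    (hirr : ∀ i j, ∃ k, 1 ≤ k ∧ 0 < (M ^ k) i j) (π T : Fin n → ℝ)
    (hπ0 : ∀ i, 0 ≤ π i) (hπ1 : ∑ i, π i = 1) (hπ : ∀ j, ∑ i, π i * M i j = π j)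
    (hT0 : ∀ i, 0 ≤ T i) (hT : ∀ j, ∑ i, T i * M i j = T j) (hpos : 0 < ∑ i, T i) (i : Fin n) :
    π i = T i / ∑ i, T i := by
  have hex : ∃ r, 0 < T r := by
    by_contra! hc
    exact absurd hpos (not_lt.2 (Finset.sum_nonpos fun i _ => hc i))
  obtain ⟨r, hr⟩ := hex
  have hTp := stat_pos M hM0 hirr T hT0 hT r hr
  obtain ⟨m, -, hm⟩ := Finset.exists_min_image Finset.univ (fun i => π i / T i) ⟨r, Finset.mem_univ _⟩
  set t := π m / T m with ht
  have hν0 : ∀ i, 0 ≤ π i - t * T i := by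
    intro i
    have := hm i (Finset.mem_univ _)
    rw [le_div_iff₀ (hTp i)] at this
    linarith
  have hνm : π m - t * T m = 0 := by
    rw [ht]; have := (hTp m).ne'; field_simp; simp
  have hz : ∀ i, π i - t * T i = 0 := by
    intro i
    by_contra hne
    have := stat_pos M hM0 hirr (fun i => π i - t * T i) hν0 (fun j => by
      simp only [sub_mul, Finset.sum_sub_distrib, hπ, mul_assoc, ← Finset.mul_sum, hT]) i
      (lt_of_le_of_ne (hν0 i) (Ne.symm hne)) m
    linarith
  have h1 : 1 = t * ∑ i, T i := by
    rw [← hπ1, Finset.mul_sum]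
    exact Finset.sum_congr rfl fun i _ => by linarith [hz i]
  rw [eq_div_iff hpos.ne']
  have := hz i
  have : π i = t * T i := by linarith
  rw [this]
  calc t * T i * ∑ i, T i = T i * (t * ∑ i, T i) := by ring
    _ = T i := by rw [← h1, mul_one]

/-- existence of a map with positive weight flowing to `r` -/
lemma exists_tree (M : Matrix (Fin n) (Fin n) ℝ) (hM0 : ∀ i j, 0 ≤ M i j)
    (hM1 : ∀ i, ∑ j, M i j = 1)
    (hirr : ∀ i j, ∃ k, 1 ≤ k ∧ 0 < (M ^ k) i j) (r : Fin n) :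
    ∃ α : Fin n → Fin n, rch {r} α ∧ ∀ i, 0 < M i (α i) := by
  have hex : ∀ x, ∃ k, 0 < (M ^ k) x r := fun x => by
    obtain ⟨k, -, hk⟩ := hirr x r
    exact ⟨k, hk⟩
  let d : Fin n → ℕ := fun x => Nat.find (hex x)
  have hd : ∀ x, 0 < (M ^ d x) x r := fun x => Nat.find_spec (hex x)
  have step : ∀ x, ∃ y, 0 < M x y ∧ (x ≠ r → d y < d x) := by
    intro x
    by_cases hx : x = r
    · have : ∃ y, 0 < M x y := by
        by_contra! hc
        have := Finset.sum_nonpos (s := Finset.univ) fun j _ => hc j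
        rw [hM1] at this
        linarith
      obtain ⟨y, hy⟩ := this
      exact ⟨y, hy, fun h => absurd hx h⟩
    · have h := hd x
      obtain ⟨k, hk⟩ : ∃ k, d x = k + 1 := by
        refine Nat.exists_eq_succ_of_ne_zero fun h0 => ?_
        rw [h0, pow_zero, Matrix.one_apply, if_neg hx] at h
        exact lt_irrefl _ h
      rw [hk, pow_succ', Matrix.mul_apply] at h
      obtain ⟨y, hy⟩ : ∃ y, 0 < M x y * (M ^ k) y r := by
        by_contra! hc
        exact absurd h (not_lt.2 (Finset.sum_nonpos fun j _ => hc j))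
      have hxy : 0 < M x y := lt_of_le_of_ne (hM0 x y) (fun h0 => by
        rw [← h0, zero_mul] at hy; exact lt_irrefl _ hy)
      refine ⟨y, hxy, fun _ => ?_⟩
      have : d y ≤ k := Nat.find_min' (hex y) (by
        exact pos_of_mul_pos_right hy hxy.le)
      omega
  choose α h1 h2 using step
  refine ⟨α, ?_, h1⟩
  have key : ∀ N x, d x ≤ N → ∃ k, α^[k] x ∈ ({r} : Finset (Fin n)) := by
    intro N
    induction N with
    | zero =>
      intro x hx
      by_cases h : x = r
      · exact ⟨0, by simp [h]⟩
      · have := h2 x h; omega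
    | succ N ih =>
      intro x hx
      by_cases h : x = r
      · exact ⟨0, by simp [h]⟩
      · obtain ⟨k, hk⟩ := ih (α x) (by have := h2 x h; omega)
        exact ⟨k + 1, hk⟩
  exact fun x => key _ x le_rfl

noncomputable def q (M : Matrix (Fin n) (Fin n) ℝ) (α : Fin n → Fin n) : ℝ := ∏ x, M x (α x)

noncomputable def T (M : Matrix (Fin n) (Fin n) ℝ) (i : Fin n) : ℝ :=
  ∑ α : Fin n → Fin n, if rch {i} α then q M α else 0

noncomputable def R (M : Matrix (Fin n) (Fin n) ℝ) (i j : Fin n) : ℝ :=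
  ∑ α : Fin n → Fin n, if rch {i} α ∧ α i = j then q M α else 0

lemma sum_R (M : Matrix (Fin n) (Fin n) ℝ) (i : Fin n) : ∑ j, R M i j = T M i := by
  unfold R T
  rw [Finset.sum_comm]
  refine Finset.sum_congr rfl fun α _ => ?_
  by_cases h : rch {i} α <;> simp [h]

lemma R_eq (M : Matrix (Fin n) (Fin n) ℝ) (hM1 : ∀ i, ∑ j, M i j = 1) (i j : Fin n) :
    R M i j = T M i * M i j := by
  have h1 : ∀ j, R M i j = M i j * H M {i} id := by
    intro j
    have := G_eq M {i} (fun _ => j)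
    rw [H_eq M {i} (fun _ => j) id, Finset.prod_singleton] at this
    rw [← this]
    unfold R G q
    refine Finset.sum_congr rfl fun α _ => ?_
    simp [and_comm]
  have h2 : T M i = H M {i} id := by
    rw [← sum_R]
    simp only [h1]
    rw [← Finset.sum_mul, hM1, one_mul]
  rw [h1, h2, mul_comm]

lemma sum_R' (M : Matrix (Fin n) (Fin n) ℝ) (j : Fin n) : ∑ i, R M i j = T M j := by
  unfold R T
  rw [Finset.sum_comm]
  refine Finset.sum_congr rfl fun α _ => ?_
  by_cases h : rch {j} α
  · obtain ⟨hs, hj⟩ := (sgl_iff α j).2 h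
    have hb := Function.bijOn_periodicPts α
    rw [← coe_PP] at hb
    obtain ⟨i, hi, hij⟩ := hb.surjOn hj
    rw [Finset.sum_eq_single i]
    · rw [if_pos h, if_pos ⟨(sgl_iff α i).1 ⟨hs, hi⟩, hij⟩]
    · intro b _ hb'
      rw [if_neg]
      rintro ⟨h1, h2⟩
      exact hb' (hb.injOn ((sgl_iff α b).2 h1).2 hi (h2.trans hij.symm))
    · simp
  · rw [if_neg h]
    refine Finset.sum_eq_zero fun i _ => if_neg ?_
    rintro ⟨h1, rfl⟩
    obtain ⟨hs, hi⟩ := (sgl_iff α i).2 h1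
    exact h ((sgl_iff α _).1 ⟨hs, PP_step hi⟩)

lemma T_nonneg (M : Matrix (Fin n) (Fin n) ℝ) (hM0 : ∀ i j, 0 ≤ M i j) (i : Fin n) :
    0 ≤ T M i := by
  refine Finset.sum_nonneg fun α _ => ?_
  split_ifs
  · exact Finset.prod_nonneg fun x _ => hM0 _ _
  · exact le_rfl

lemma T_pos (M : Matrix (Fin n) (Fin n) ℝ) (hM0 : ∀ i j, 0 ≤ M i j)
    (hM1 : ∀ i, ∑ j, M i j = 1)
    (hirr : ∀ i j, ∃ k, 1 ≤ k ∧ 0 < (M ^ k) i j) (i : Fin n) :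
    0 < T M i := by
  obtain ⟨α, h1, h2⟩ := exists_tree M hM0 hM1 hirr i
  refine Finset.sum_pos' (fun α _ => ?_) ⟨α, Finset.mem_univ _, ?_⟩
  · split_ifs
    · exact Finset.prod_nonneg fun x _ => hM0 _ _
    · exact le_rfl
  · rw [if_pos h1]
    exact Finset.prod_pos fun x _ => h2 x

lemma EQ_eq (M : Matrix (Fin n) (Fin n) ℝ) :
    ∑ α : Fin n → Fin n, q M α * (if sgl α then ((PP α).card : ℝ) else 0) = ∑ i, T M i := by
  unfold T
  rw [Finset.sum_comm]
  refine Finset.sum_congr rfl fun α _ => ?_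
  simp only [← sgl_iff]
  by_cases h : sgl α
  · simp [h, mul_comm]
  · simp [h]

lemma inner_claim (hn : 0 < n) (α : Fin n → Fin n) (L : Fin n → Fin n → ℝ) :
    (∑ S : Finset (Fin n), ∑ σ : Equiv.Perm (Fin n),
      if (vld S σ ∧ (PP α = S ∧ ∀ x ∈ S, α x = σ x)) then ∑ x ∈ S, L x (σ x) else 0)
    = if sgl α then ∑ x ∈ PP α, L x (α x) else 0 := by
  by_cases h : sgl α
  · rw [if_pos h]
    have hb := Function.bijOn_periodicPts α
    rw [← coe_PP] at hb
    let f : Fin n → Fin n := fun x => if x ∈ PP α then α x else x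
    have hf1 : ∀ x ∈ PP α, f x = α x := fun x hx => if_pos hx
    have hf2 : ∀ x ∉ PP α, f x = x := fun x hx => if_neg hx
    have hf : Function.Injective f := by
      intro x y hxy
      by_cases hx : x ∈ PP α <;> by_cases hy : y ∈ PP α
      · rw [hf1 x hx, hf1 y hy] at hxy
        exact hb.injOn hx hy hxy
      · rw [hf1 x hx, hf2 y hy] at hxy
        exact absurd (hxy ▸ PP_step hx) hy
      · rw [hf2 x hx, hf1 y hy] at hxy
        exact absurd (hxy ▸ PP_step hy) hx
      · rwa [hf2 x hx, hf2 y hy] at hxy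
    let σ0 : Equiv.Perm (Fin n) := Equiv.ofBijective f (Finite.injective_iff_bijective.1 hf)
    have hσ : ∀ x, σ0 x = f x := fun x => rfl
    have hσ1 : ∀ x ∈ PP α, α x = σ0 x := fun x hx => (hf1 x hx).symm
    have hv : vld (PP α) σ0 := by
      refine ⟨?_, hf2, ?_⟩
      · obtain ⟨k, hk⟩ := reach_PP α ⟨0, hn⟩
        exact ⟨_, hk⟩
      · intro x hx y hy
        obtain ⟨k, hk⟩ := h x hx y hy
        refine ⟨k, ?_⟩
        rw [← hk]
        exact iter_eq (fun x hx => PP_step hx) (fun x hx => (hσ1 x hx).symm) k x hx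
    rw [Finset.sum_eq_single (PP α), Finset.sum_eq_single σ0]
    · rw [if_pos ⟨hv, rfl, hσ1⟩]
      exact Finset.sum_congr rfl fun x hx => by rw [hσ1 x hx]
    · intro σ _ hne
      rw [if_neg]
      rintro ⟨h1, -, h3⟩
      apply hne
      ext x : 1
      by_cases hx : x ∈ PP α
      · rw [← h3 x hx, hσ1 x hx]
      · rw [h1.2.1 x hx, hv.2.1 x hx]
    · simp
    · intro S _ hne
      refine Finset.sum_eq_zero fun σ _ => if_neg ?_
      rintro ⟨-, h2, -⟩
      exact hne h2.symm
    · simp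
  · rw [if_neg h]
    refine Finset.sum_eq_zero fun S _ => Finset.sum_eq_zero fun σ _ => if_neg ?_
    rintro ⟨hv, rfl, h3⟩
    apply h
    intro x hx y hy
    obtain ⟨k, hk⟩ := hv.2.2 x hx y hy
    exact ⟨k, by rw [← hk]; exact iter_eq (fun x hx => vld_mem hv hx) h3 k x hx⟩

noncomputable def W (M : Matrix (Fin n) (Fin n) ℝ) (S : Finset (Fin n)) (σ : Equiv.Perm (Fin n)) : ℝ :=
  ∑ α : Fin n → Fin n, if (PP α = S ∧ ∀ x ∈ S, α x = σ x) then q M α else 0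

lemma W_sum (hn : 0 < n) (M : Matrix (Fin n) (Fin n) ℝ) (L : Fin n → Fin n → ℝ) :
    (∑ S : Finset (Fin n), ∑ σ : Equiv.Perm (Fin n),
      if vld S σ then W M S σ * ∑ x ∈ S, L x (σ x) else 0) = ∑ i, ∑ j, R M i j * L i j := by
  have e1 : ∀ S (σ : Equiv.Perm (Fin n)), (if vld S σ then W M S σ * ∑ x ∈ S, L x (σ x) else 0) =
      ∑ α : Fin n → Fin n, q M α *
        (if (vld S σ ∧ (PP α = S ∧ ∀ x ∈ S, α x = σ x)) then ∑ x ∈ S, L x (σ x) else 0) := by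
    intro S σ
    by_cases h : vld S σ
    · simp only [h, if_true, true_and, W, Finset.sum_mul]
      refine Finset.sum_congr rfl fun α _ => ?_
      split_ifs <;> simp
    · simp [h]
  have e2 : ∀ i, ∑ j, R M i j * L i j =
      ∑ α : Fin n → Fin n, q M α * (if rch {i} α then L i (α i) else 0) := by
    intro i
    simp only [R, Finset.sum_mul]
    rw [Finset.sum_comm]
    refine Finset.sum_congr rfl fun α _ => ?_
    by_cases h : rch {i} α
    · simp only [h, true_and, if_true, ite_mul, zero_mul]
      rw [Finset.sum_ite_eq]
      simp
    · simp [h]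
  simp only [e1, e2]
  have e3 : ∀ S : Finset (Fin n), (∑ σ : Equiv.Perm (Fin n), ∑ α : Fin n → Fin n, q M α *
        (if (vld S σ ∧ (PP α = S ∧ ∀ x ∈ S, α x = σ x)) then ∑ x ∈ S, L x (σ x) else 0))
      = ∑ α : Fin n → Fin n, q M α * ∑ σ : Equiv.Perm (Fin n),
        (if (vld S σ ∧ (PP α = S ∧ ∀ x ∈ S, α x = σ x)) then ∑ x ∈ S, L x (σ x) else 0) := by
    intro S
    rw [Finset.sum_comm]
    simp only [Finset.mul_sum]
  simp only [e3]
  rw [Finset.sum_comm, Finset.sum_comm (s := (Finset.univ : Finset (Fin n)))]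
  refine Finset.sum_congr rfl fun α _ => ?_
  rw [← Finset.mul_sum, ← Finset.mul_sum, inner_claim hn]
  congr 1
  simp only [← sgl_iff]
  by_cases h : sgl α
  · simp [h]
  · simp [h]

lemma W_eq (M : Matrix (Fin n) (Fin n) ℝ) {S : Finset (Fin n)} {σ : Equiv.Perm (Fin n)}
    (hv : vld S σ) : W M S σ = (∏ x ∈ S, M x (σ x)) * H M S id := by
  rw [H_eq M S id σ, ← G_eq]
  unfold W G q
  exact Finset.sum_congr rfl fun α _ => by simp only [cyc_iff hv]

lemma log_W (M : Matrix (Fin n) (Fin n) ℝ) (hM0 : ∀ i j, 0 ≤ M i j)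
    (hsym : ∀ i j, 0 < M i j ↔ 0 < M j i)
    {S : Finset (Fin n)} {σ : Equiv.Perm (Fin n)}
    (hv : vld S σ) (E : ℝ) (hE : 0 < E) (hW : W M S σ ≠ 0) :
    Real.log ((W M S σ / E) / (W M S σ⁻¹ / E)) =
      ∑ x ∈ S, Real.log (M x (σ x) / M (σ x) x) := by
  rw [div_div_div_cancel_right₀ hE.ne']
  rw [W_eq M hv] at hW ⊢
  rw [W_eq M (vld_inv hv)]
  have hH := right_ne_zero_of_mul hW
  have hP := Finset.prod_ne_zero_iff.1 (left_ne_zero_of_mul hW)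
  rw [mul_div_mul_right _ _ hH]
  have : ∏ x ∈ S, M x (σ⁻¹ x) = ∏ x ∈ S, M (σ x) x := by
    refine (Finset.prod_nbij' (fun x => σ x) (fun x => σ⁻¹ x) ?_ ?_ ?_ ?_ ?_).symm
    · exact fun x hx => vld_mem hv hx
    · exact fun x hx => vld_mem (vld_inv hv) hx
    · intro x _; simp
    · intro x _; simp
    · intro x _; simp
  rw [this, ← Finset.prod_div_distrib, Real.log_prod]
  intro x hx
  have h1 : 0 < M x (σ x) := lt_of_le_of_ne (hM0 _ _) (hP x hx).symm
  exact (div_pos h1 ((hsym _ _).1 h1)).ne'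

end EPC

/-- Cycle representation of the stationary entropy production rate:
Σ_{(i,j):M_{ij}>0} π_i M_{ij} log(M_{ij}/M_{ji}) = Σ_{cycles c, w_c>0} w_c log(w_c/w_{c_-}),
where c_- = (S, σ⁻¹) is the reversed cycle and w_c = Q(α : A(α)=c)/E_Q[‖A(α)‖]. -/
theorem entropy_production_cycle_representation (n : ℕ)
    (M : Matrix (Fin n) (Fin n) ℝ)
    (hM0 : ∀ i j, 0 ≤ M i j) (hM1 : ∀ i, ∑ j, M i j = 1)
    (hsym : ∀ i j, 0 < M i j ↔ 0 < M j i)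
    (hirr : ∀ i j, ∃ k, 1 ≤ k ∧ 0 < (M ^ k) i j)
    (π : Fin n → ℝ) (hπ0 : ∀ i, 0 ≤ π i) (hπ1 : ∑ i, π i = 1)
    (hπstat : ∀ j, ∑ i, π i * M i j = π j)
    (Q : (Fin n → Fin n) → ℝ) (hQ : ∀ α, Q α = ∏ i, M i (α i))
    (Per : (Fin n → Fin n) → Finset (Fin n))
    (hPer : ∀ α, Per α = Finset.univ.filter fun x => ∃ k, 1 ≤ k ∧ α^[k] x = x)
    (single : (Fin n → Fin n) → Prop)
    (hsingle : ∀ α, single α ↔ ∀ x ∈ Per α, ∀ y ∈ Per α, ∃ k, α^[k] x = y)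
    (normA : (Fin n → Fin n) → ℝ)
    (hnormA : ∀ α, normA α = if single α then ((Per α).card : ℝ) else 0)
    (EQ : ℝ) (hEQ : EQ = ∑ α : Fin n → Fin n, Q α * normA α)
    (wc : Finset (Fin n) → Equiv.Perm (Fin n) → ℝ)
    (hwc : ∀ S σ, wc S σ =
      (∑ α : Fin n → Fin n, if (Per α = S ∧ ∀ x ∈ S, α x = σ x) then Q α else 0) / EQ) :
    (∑ i, ∑ j, if 0 < M i j then π i * M i j * Real.log (M i j / M j i) else 0)
      = ∑ S : Finset (Fin n), ∑ σ : Equiv.Perm (Fin n),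
          if (S.Nonempty ∧ (∀ x ∉ S, σ x = x) ∧
              (∀ x ∈ S, ∀ y ∈ S, ∃ k, (⇑σ)^[k] x = y) ∧ 0 < wc S σ)
            then wc S σ * Real.log (wc S σ / wc S σ⁻¹) else 0 := by
  have hn : 0 < n := by
    rcases Nat.eq_zero_or_pos n with rfl | h
    · simp at hπ1
    · exact h
  obtain rfl : Q = EPC.q M := funext hQ
  obtain rfl : Per = EPC.PP := funext fun α => by
    rw [hPer]; rfl
  obtain rfl : single = EPC.sgl := funext fun α => propext (hsingle α)
  have hEQ' : EQ = ∑ i, EPC.T M i := by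
    rw [hEQ, ← EPC.EQ_eq]
    refine Finset.sum_congr rfl fun α _ => ?_
    rw [hnormA]
  have hpos : 0 < EQ := by
    rw [hEQ']
    exact Finset.sum_pos (fun i _ => EPC.T_pos M hM0 hM1 hirr i) ⟨⟨0, hn⟩, Finset.mem_univ _⟩
  have hπ : ∀ i, π i = EPC.T M i / EQ := by
    intro i
    rw [hEQ']
    refine EPC.stat_unique M hM0 hirr π _ hπ0 hπ1 hπstat (EPC.T_nonneg M hM0) ?_ (hEQ' ▸ hpos) i
    intro j
    simp only [← EPC.R_eq M hM1]
    exact EPC.sum_R' M j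
  have hw : ∀ S σ, wc S σ = EPC.W M S σ / EQ := by
    intro S σ
    rw [hwc]
    rfl
  have hW0 : ∀ S σ, 0 ≤ EPC.W M S σ := by
    intro S σ
    refine Finset.sum_nonneg fun α _ => ?_
    split_ifs
    · exact Finset.prod_nonneg fun x _ => hM0 _ _
    · exact le_rfl
  have hL : ∀ i j, (if 0 < M i j then π i * M i j * Real.log (M i j / M j i) else 0)
      = EPC.R M i j * Real.log (M i j / M j i) / EQ := by
    intro i j
    rw [EPC.R_eq M hM1, hπ]
    split_ifs with h
    · ring
    · have : M i j = 0 := le_antisymm (not_lt.1 h) (hM0 i j)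
      simp [this]
  have hR : ∀ S (σ : Equiv.Perm (Fin n)), (if (S.Nonempty ∧ (∀ x ∉ S, σ x = x) ∧
              (∀ x ∈ S, ∀ y ∈ S, ∃ k, (⇑σ)^[k] x = y) ∧ 0 < wc S σ)
            then wc S σ * Real.log (wc S σ / wc S σ⁻¹) else 0)
      = (if EPC.vld S σ then
          EPC.W M S σ * ∑ x ∈ S, Real.log (M x (σ x) / M (σ x) x) else 0) / EQ := by
    intro S σ
    by_cases hv : EPC.vld S σ
    · rw [if_pos hv]
      by_cases h0 : EPC.W M S σ = 0
      · simp [hw, h0]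
      · have hp : 0 < wc S σ := by
          rw [hw]
          exact div_pos (lt_of_le_of_ne (hW0 S σ) (Ne.symm h0)) hpos
        rw [if_pos ⟨hv.1, hv.2.1, hv.2.2, hp⟩, hw, hw,
          EPC.log_W M hM0 hsym hv EQ hpos h0]
        ring
    · rw [if_neg hv, if_neg, zero_div]
      rintro ⟨h1, h2, h3, -⟩
      exact hv ⟨h1, h2, h3⟩
  simp only [hL, hR, ← Finset.sum_div]
  rw [EPC.W_sum hn M (fun i j => Real.log (M i j / M j i))]
end

section
/- (Directed matrix-forest theorem.) Let M be an n×n row-stochastic matrix and let I ⊆ {1,…,n} be nonempty. A directed forest rooted at I is a map τ : {1,…,n} → {1,…,n} with τ(s) = s for all s ∈ I such that for every state j there exists k ≥ 0 with τ^k(j) ∈ I; its weight is Π_{j ∉ I} M_{j, τ(j)}. Then the total weight of all directed forests rooted at I equals det( (Id − M)(I^c) ), where (Id − M)(I^c) is the submatrix of Id − M obtained by deleting all rows and columns with indices in I. -/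
open Finset
open scoped Classical

lemma det_eq_one_aux {α : Type*} {ft : Fintype α} {de : DecidableEq α} {N : Matrix α α ℝ}
    (h1 : ∀ i, N i i = 1) (h2 : ∀ i j, i ≠ j → N i j = 0) : N.det = 1 := by
  have : N = 1 := by
    ext i j
    by_cases h : i = j
    · subst h; simp [h1]
    · simp [h2 i j h, h]
  rw [this, Matrix.det_one]

lemma forest_det_aux {n : ℕ} (I : Finset (Fin n)) (τ : Fin n → Fin n) :
    Matrix.det (Matrix.of fun i j : Fin n =>
      if i ∈ I then (if j = i then (1 : ℝ) else 0)
      else (if j = i then (1 : ℝ) else 0) - (if j = τ i then (1 : ℝ) else 0))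
      = if ∀ j, ∃ k, τ^[k] j ∈ I then 1 else 0 := by
  split_ifs with h
  · let b : Fin n → ℕᵒᵈ := fun i => OrderDual.toDual (Nat.find (h i))
    have hb : ∀ i, i ∉ I → Nat.find (h (τ i)) < Nat.find (h i) := by
      intro i hi
      have hs := Nat.find_spec (h i)
      rcases hk : Nat.find (h i) with _ | m
      · rw [hk] at hs
        exact absurd hs hi
      · rw [hk, Function.iterate_succ_apply] at hs
        exact Nat.lt_succ_of_le (Nat.find_min' _ hs)
    rw [Matrix.BlockTriangular.det (b := b)]
    · apply Finset.prod_eq_one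
      intro a _
      have key : ∀ i j, b i = a → b j = a → i ∉ I → j ≠ τ i := by
        rintro i j hi hj hiI rfl
        have h1 := hb i hiI
        have h2 : Nat.find (h (τ i)) = Nat.find (h i) :=
          OrderDual.toDual.injective (hj.trans hi.symm)
        omega
      apply det_eq_one_aux
      · rintro ⟨i, hi⟩
        by_cases hiI : i ∈ I
        · simp [Matrix.toSquareBlock_def, hiI]
        · simp [Matrix.toSquareBlock_def, hiI, key i i hi hi hiI]
      · rintro ⟨i, hi⟩ ⟨j, hj⟩ hij
        have hne : j ≠ i := by rintro rfl; exact hij rfl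
        by_cases hiI : i ∈ I
        · simp [Matrix.toSquareBlock_def, hiI, hne]
        · simp [Matrix.toSquareBlock_def, hiI, hne, key i j hi hj hiI]
    · intro i j hij
      have hij' : Nat.find (h i) < Nat.find (h j) := hij
      have h1 : j ≠ i := by rintro rfl; exact lt_irrefl _ hij'
      simp only [Matrix.of_apply, h1, if_false]
      by_cases hiI : i ∈ I
      · simp [hiI]
      · have : j ≠ τ i := by
          rintro rfl
          exact absurd (hb i hiI) (by omega)
        simp [hiI, this]
  · push Not at h
    obtain ⟨j0, hj0⟩ := h
    apply Matrix.exists_mulVec_eq_zero_iff.mp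
    refine ⟨fun i => if ∃ k, τ^[k] i ∈ I then 0 else 1, ?_, ?_⟩
    · intro h0
      have := congrFun h0 j0
      simp [hj0] at this
    · ext i
      by_cases hiI : i ∈ I
      · have : ∃ k, τ^[k] i ∈ I := ⟨0, hiI⟩
        simp only [Matrix.mulVec, dotProduct, Matrix.of_apply, hiI, if_true, ite_mul, one_mul,
          zero_mul, Finset.sum_ite_eq', Finset.mem_univ, this, Pi.zero_apply]
      · have : (∃ k, τ^[k] (τ i) ∈ I) ↔ ∃ k, τ^[k] i ∈ I := by
          constructor
          · rintro ⟨k, hk⟩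
            exact ⟨k + 1, by rwa [Function.iterate_succ_apply]⟩
          · rintro ⟨_ | k, hk⟩
            · exact absurd hk hiI
            · exact ⟨k, by rwa [Function.iterate_succ_apply] at hk⟩
        simp only [Matrix.mulVec, dotProduct, Matrix.of_apply, hiI, if_false, sub_mul,
          Finset.sum_sub_distrib, ite_mul, one_mul, zero_mul, Finset.sum_ite_eq',
          Finset.mem_univ, if_true, this, sub_self, Finset.sum_ite_eq, Pi.zero_apply]

/-- Directed matrix-forest theorem: the total weight of directed forests rooted at a
nonempty set I equals the principal minor det((Id − M)(Iᶜ)) obtained by deleting the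
rows and columns indexed by I. -/
theorem directed_matrix_forest_theorem (n : ℕ)
    (M : Matrix (Fin n) (Fin n) ℝ)
    (hM0 : ∀ i j, 0 ≤ M i j) (hM1 : ∀ i, ∑ j, M i j = 1)
    (I : Finset (Fin n)) (hI : I.Nonempty) :
    (∑ τ : Fin n → Fin n,
      if ((∀ s ∈ I, τ s = s) ∧ ∀ j, ∃ k, τ^[k] j ∈ I)
        then ∏ j ∈ Iᶜ, M j (τ j) else 0)
      = Matrix.det (Matrix.of fun i j : {x : Fin n // x ∉ I} =>
          ((1 : Matrix (Fin n) (Fin n) ℝ) - M) i.1 j.1) := by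
  let A : Matrix (Fin n) (Fin n) ℝ := Matrix.of fun i j =>
    if i ∈ I then (if j = i then (1 : ℝ) else 0) else ((1 : Matrix (Fin n) (Fin n) ℝ) - M) i j
  let w : Fin n → Fin n → ℝ := fun i t => if i ∈ I then (if t = i then 1 else 0) else M i t
  let r : Fin n → Fin n → Fin n → ℝ := fun i t j =>
    if i ∈ I then (if j = i then (1 : ℝ) else 0)
      else (if j = i then (1 : ℝ) else 0) - (if j = t then (1 : ℝ) else 0)
  have hA1 : A.det = Matrix.det (Matrix.of fun i j : {x : Fin n // x ∉ I} =>
          ((1 : Matrix (Fin n) (Fin n) ℝ) - M) i.1 j.1) := by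
    rw [Matrix.twoBlockTriangular_det' A (fun i => i ∈ I)]
    · have h2 : (A.toSquareBlockProp fun i => i ∉ I) =
          Matrix.of fun i j : {x : Fin n // x ∉ I} =>
          ((1 : Matrix (Fin n) (Fin n) ℝ) - M) i.1 j.1 := by
        ext ⟨i, hi⟩ ⟨j, hj⟩
        simp [A, Matrix.toSquareBlockProp_def, hi]
      rw [h2]
      rw [det_eq_one_aux, one_mul]
      · rintro ⟨i, hi⟩
        simp [A, Matrix.toSquareBlockProp_def, hi]
      · rintro ⟨i, hi⟩ ⟨j, hj⟩ hij
        have hne : j ≠ i := by rintro rfl; exact hij rfl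
        simp [A, Matrix.toSquareBlockProp_def, hi, hne]
    · intro i hi j hj
      have : j ≠ i := by rintro rfl; exact hj hi
      simp [A, hi, this]
  have hA2 : A = fun i => ∑ t, w i t • r i t := by
    ext i j
    by_cases hi : i ∈ I
    · simp only [A, w, r, hi, if_true, Matrix.of_apply, Finset.sum_apply, Pi.smul_apply,
        smul_eq_mul, ite_mul, one_mul, zero_mul, Finset.sum_ite_eq', Finset.mem_univ]
    · simp [A, w, r, hi, mul_sub, Finset.sum_sub_distrib, hM1, Matrix.one_apply, eq_comm]
  have hA3 : A.det = ∑ τ : Fin n → Fin n, (∏ i, w i (τ i)) *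
      Matrix.det (Matrix.of fun i => r i (τ i)) := by
    rw [hA2]
    change (Matrix.detRowAlternating (n := Fin n) (R := ℝ)).toMultilinearMap
      (fun i => ∑ t, w i t • r i t) = _
    rw [MultilinearMap.map_sum]
    apply Finset.sum_congr rfl
    intro τ _
    rw [MultilinearMap.map_smul_univ]
    rfl
  rw [← hA1, hA3]
  apply Finset.sum_congr rfl
  intro τ _
  have hd : Matrix.det (Matrix.of fun i => r i (τ i))
      = if ∀ j, ∃ k, τ^[k] j ∈ I then 1 else 0 := forest_det_aux I τ
  have hw : ∏ i, w i (τ i) = if ∀ s ∈ I, τ s = s then ∏ j ∈ Iᶜ, M j (τ j) else 0 := by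
    rw [← Finset.prod_mul_prod_compl I]
    have h2 : ∏ i ∈ Iᶜ, w i (τ i) = ∏ j ∈ Iᶜ, M j (τ j) := by
      apply Finset.prod_congr rfl
      intro i hi
      simp [w, Finset.mem_compl.mp hi]
    rw [h2]
    split_ifs with h
    · rw [Finset.prod_eq_one, one_mul]
      intro i hi
      simp [w, hi, h i hi]
    · push Not at h
      obtain ⟨s, hs, hne⟩ := h
      rw [Finset.prod_eq_zero hs, zero_mul]
      simp [w, hs, hne]
  rw [hd, hw]
  by_cases h1 : ∀ s ∈ I, τ s = s <;> by_cases h2 : ∀ j, ∃ k, τ^[k] j ∈ I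
  · rw [if_pos ⟨h1, h2⟩, if_pos h1, if_pos h2, mul_one]
  · rw [if_neg (fun h => h2 h.2), if_neg h2, mul_zero]
  · rw [if_neg (fun h => h1 h.1), if_neg h1, zero_mul]
  · rw [if_neg (fun h => h1 h.1), if_neg h1, zero_mul]
end

section
/- Let M be an n×n row-stochastic matrix and fix states a and b. For a sequence of pairwise distinct states (i_1, …, i_t) with t ≥ 1, i_1 = a and i_t = b (if a = b then necessarily t = 1), define its weight as M_{i_1 i_2} M_{i_2 i_3} ⋯ M_{i_{t−1} i_t} · e(𝓕_{{i_1,…,i_t}}), where e(𝓕_S) is the total weight of directed forests rooted at S. Then the sum of these weights over all such sequences (over all lengths t and all choices of intermediate distinct states) equals e(𝒯_b), the total weight of directed rooted trees with root b. -/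
open Finset
open scoped Classical


lemma pfd_reach {n : ℕ} (τ τ' : Fin n → Fin n) (S R : Finset (Fin n))
    (hag : ∀ j, j ∉ S → τ' j = τ j) (hS : ∀ j ∈ S, ∃ k, τ'^[k] j ∈ R) :
    ∀ k j, τ^[k] j ∈ S → ∃ k', τ'^[k'] j ∈ R := by
  intro k
  induction k with
  | zero => intro j hj; exact hS j hj
  | succ k ih =>
    intro j hj
    by_cases h : j ∈ S
    · exact hS j h
    · rw [Function.iterate_succ_apply] at hj
      obtain ⟨k', hk'⟩ := ih _ hj
      refine ⟨k' + 1, ?_⟩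
      rw [Function.iterate_succ_apply, hag j h]
      exact hk'

lemma pfd_step {n t : ℕ} (M : Matrix (Fin n) (Fin n) ℝ) (b : Fin n)
    (f : Fin (t + 1) → Fin n) (hf : Function.Injective f) (hb : f (Fin.last t) = b) :
    (∏ s : Fin t, M (f s.castSucc) (f s.succ)) *
      (∑ τ : Fin n → Fin n,
        if ((∀ s ∈ Finset.image f Finset.univ, τ s = s) ∧
            ∀ j, ∃ k, τ^[k] j ∈ Finset.image f Finset.univ)
        then ∏ j ∈ (Finset.image f Finset.univ)ᶜ, M j (τ j) else 0)
    = ∑ τ : Fin n → Fin n,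
        if (((∀ s ∈ ({b} : Finset (Fin n)), τ s = s) ∧
            ∀ j, ∃ k, τ^[k] j ∈ ({b} : Finset (Fin n))) ∧
            ∀ s : Fin t, τ (f s.castSucc) = f s.succ)
        then ∏ j ∈ ({b} : Finset (Fin n))ᶜ, M j (τ j) else 0 := by
  rw [Finset.mul_sum]
  simp only [mul_ite, mul_zero]
  rw [← Finset.sum_filter, ← Finset.sum_filter]
  set S := Finset.image f Finset.univ with hSdef
  have hfS : ∀ s, f s ∈ S := fun s => Finset.mem_image_of_mem _ (Finset.mem_univ _)
  have hbS : b ∈ S := hb ▸ hfS _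
  have hcb : ∀ s : Fin t, f s.castSucc ≠ b := by
    intro s h
    rw [← hb] at h
    exact (Fin.castSucc_lt_last s).ne (hf h)
  have hcase : ∀ j ∈ S, j = b ∨ ∃ s : Fin t, f s.castSucc = j := by
    intro j hj
    obtain ⟨s, -, rfl⟩ := Finset.mem_image.mp hj
    induction s using Fin.lastCases with
    | last => exact Or.inl hb
    | cast s => exact Or.inr ⟨s, rfl⟩
  let G : (Fin n → Fin n) → Fin n → Fin n := fun τ j =>
    if h : ∃ s : Fin t, f s.castSucc = j then f h.choose.succ else τ j
  let H : (Fin n → Fin n) → Fin n → Fin n := fun τ j => if j ∈ S then j else τ j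
  have hG1 : ∀ τ (s : Fin t), G τ (f s.castSucc) = f s.succ := by
    intro τ s
    have h : ∃ s' : Fin t, f s'.castSucc = f s.castSucc := ⟨s, rfl⟩
    have h2 : h.choose = s := Fin.castSucc_injective _ (hf h.choose_spec)
    simp only [G]
    rw [dif_pos h, h2]
  have hG2 : ∀ τ j, j ∉ S → G τ j = τ j := by
    intro τ j hj
    simp only [G]
    rw [dif_neg]
    rintro ⟨s, rfl⟩
    exact hj (hfS _)
  have hG3 : ∀ τ, G τ b = τ b := by
    intro τ
    simp only [G]
    rw [dif_neg]
    rintro ⟨s, h⟩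
    exact hcb s h
  have hH1 : ∀ τ j, j ∈ S → H τ j = j := fun τ j hj => by simp [H, hj]
  have hH2 : ∀ τ j, j ∉ S → H τ j = τ j := fun τ j hj => by simp [H, hj]
  refine Finset.sum_bij' (fun τ _ => G τ) (fun τ _ => H τ) ?_ ?_ ?_ ?_ ?_
  · intro τ hτ
    obtain ⟨h1, h2⟩ := (Finset.mem_filter.mp hτ).2
    refine Finset.mem_filter.mpr ⟨Finset.mem_univ _, ⟨?_, ?_⟩, hG1 τ⟩
    · intro s hs
      rw [Finset.mem_singleton.mp hs, hG3]
      exact h1 b hbS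
    · intro j
      obtain ⟨k, hk⟩ := h2 j
      refine pfd_reach τ (G τ) S {b} (hG2 τ) ?_ k j hk
      intro j hj
      obtain ⟨s, -, rfl⟩ := Finset.mem_image.mp hj
      induction s using Fin.reverseInduction with
      | last => exact ⟨0, by simp [hb]⟩
      | cast s ih =>
        obtain ⟨k, hk⟩ := ih (hfS _)
        exact ⟨k + 1, by rw [Function.iterate_succ_apply, hG1]; exact hk⟩
  · intro τ hτ
    obtain ⟨⟨h1, h2⟩, h3⟩ := (Finset.mem_filter.mp hτ).2
    refine Finset.mem_filter.mpr ⟨Finset.mem_univ _, hH1 τ, ?_⟩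
    intro j
    obtain ⟨k, hk⟩ := h2 j
    refine pfd_reach τ (H τ) S S (hH2 τ) (fun j hj => ⟨0, hj⟩) k j ?_
    rw [Finset.mem_singleton.mp hk]
    exact hbS
  · intro τ hτ
    obtain ⟨h1, h2⟩ := (Finset.mem_filter.mp hτ).2
    funext j
    by_cases hj : j ∈ S
    · rw [hH1 _ _ hj, h1 j hj]
    · rw [hH2 _ _ hj, hG2 _ _ hj]
  · intro τ hτ
    obtain ⟨⟨h1, h2⟩, h3⟩ := (Finset.mem_filter.mp hτ).2
    funext j
    by_cases hj : j ∈ S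
    · rcases hcase j hj with rfl | ⟨s, rfl⟩
      · rw [hG3, hH1 _ _ hj, h1 j (Finset.mem_singleton_self _)]
      · rw [hG1, h3]
    · rw [hG2 _ _ hj, hH2 _ _ hj]
  · intro τ hτ
    have hun : ({b} : Finset (Fin n))ᶜ
        = Finset.image (fun s : Fin t => f s.castSucc) Finset.univ ∪ Sᶜ := by
      ext j
      simp only [Finset.mem_compl, Finset.mem_singleton, Finset.mem_union, Finset.mem_image,
        Finset.mem_univ, true_and]
      constructor
      · intro h
        by_cases hj : j ∈ S
        · exact Or.inl ((hcase j hj).resolve_left h)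
        · exact Or.inr hj
      · rintro (⟨s, rfl⟩ | h)
        · exact hcb s
        · rintro rfl
          exact h hbS
    rw [hun, Finset.prod_union, Finset.prod_image]
    · congr 1
      · exact Finset.prod_congr rfl fun s _ => by rw [hG1]
      · exact Finset.prod_congr rfl fun j hj => by rw [hG2 _ _ (Finset.mem_compl.mp hj)]
    · intro x _ y _ h
      exact Fin.castSucc_injective _ (hf h)
    · rw [Finset.disjoint_left]
      intro j hj hj'
      obtain ⟨s, -, rfl⟩ := Finset.mem_image.mp hj
      exact Finset.mem_compl.mp hj' (hfS _)

lemma pfd_iter {n t : ℕ} (τ : Fin n → Fin n) (f : Fin (t + 1) → Fin n)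
    (h : ∀ s : Fin t, τ (f s.castSucc) = f s.succ) (s : Fin (t + 1)) :
    f s = τ^[s.val] (f 0) := by
  induction s using Fin.induction with
  | zero => rfl
  | succ s ih =>
    rw [← h, ih, Fin.val_succ, Function.iterate_succ_apply']
    rfl

lemma pfd_count {n : ℕ} (a b : Fin n) (τ : Fin n → Fin n)
    (h2 : ∃ k, τ^[k] a = b) (w : ℝ) :
    (∑ t ∈ Finset.range n, ∑ f : Fin (t + 1) → Fin n,
      if ((Function.Injective f ∧ f 0 = a ∧ f (Fin.last t) = b) ∧
        ∀ s : Fin t, τ (f s.castSucc) = f s.succ) then w else 0) = w := by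
  let T := Nat.find h2
  have hT : τ^[T] a = b := Nat.find_spec h2
  have hmin : ∀ m, τ^[m] a = b → T ≤ m := fun m hm => Nat.find_min' h2 hm
  have hlt : ∀ i j, i < j → j ≤ T → τ^[i] a ≠ τ^[j] a := by
    intro i j hij hj h
    have h3 : τ^[(T - j) + i] a = b := by
      rw [Function.iterate_add_apply, h, ← Function.iterate_add_apply, Nat.sub_add_cancel hj, hT]
    have := hmin _ h3
    omega
  have hinj : Function.Injective (fun s : Fin (T + 1) => τ^[s.val] a) := by
    intro x y h
    rcases lt_trichotomy x.val y.val with h' | h' | h'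
    · exact absurd h (hlt _ _ h' (by omega))
    · exact Fin.ext h'
    · exact absurd h.symm (hlt _ _ h' (by omega))
  have hTn : T < n := by
    have := Fintype.card_le_of_injective _ hinj
    simp only [Fintype.card_fin] at this
    omega
  rw [Finset.sum_eq_single T]
  · rw [Finset.sum_eq_single (fun s : Fin (T + 1) => τ^[s.val] a)]
    · rw [if_pos]
      refine ⟨⟨hinj, rfl, hT⟩, ?_⟩
      intro s
      simp only [Fin.val_castSucc, Fin.val_succ]
      rw [Function.iterate_succ_apply']
    · intro f _ hne
      rw [if_neg]
      rintro ⟨⟨hf, h0, hl⟩, h⟩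
      apply hne
      funext s
      rw [pfd_iter τ f h s, h0]
    · intro h; exact absurd (Finset.mem_univ _) h
  · intro t _ hne
    refine Finset.sum_eq_zero fun f _ => ?_
    rw [if_neg]
    rintro ⟨⟨hf, h0, hl⟩, h⟩
    have hit := pfd_iter τ f h
    rw [h0] at hit
    have hle : T ≤ t := hmin t (by rw [← hl, hit]; rfl)
    have h4 : f ⟨T, by omega⟩ = f (Fin.last t) := by
      rw [hl, hit]; exact hT
    have := congrArg Fin.val (hf h4)
    exact hne this.symm
  · intro h; exact absurd (Finset.mem_range.mpr hTn) h

/-- Summing, over all sequences of pairwise distinct states from a to b, the path weight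
M_{i₁i₂}⋯M_{i_{t−1}i_t} times the forest weight e(𝓕_{{i₁,…,i_t}}) recovers the total
weight e(𝒯_b) of directed rooted trees with root b. -/
theorem path_forest_decomposition_of_trees (n : ℕ)
    (M : Matrix (Fin n) (Fin n) ℝ)
    (hM0 : ∀ i j, 0 ≤ M i j) (hM1 : ∀ i, ∑ j, M i j = 1)
    (a b : Fin n)
    (eF : Finset (Fin n) → ℝ)
    (heF : ∀ S, eF S = ∑ τ : Fin n → Fin n,
      if ((∀ s ∈ S, τ s = s) ∧ ∀ j, ∃ k, τ^[k] j ∈ S)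
        then ∏ j ∈ Sᶜ, M j (τ j) else 0) :
    (∑ t ∈ Finset.range n, ∑ f : Fin (t + 1) → Fin n,
      if (Function.Injective f ∧ f 0 = a ∧ f (Fin.last t) = b)
        then (∏ s : Fin t, M (f s.castSucc) (f s.succ))
              * eF (Finset.image f Finset.univ)
        else 0)
      = eF {b} := by
  have key : ∀ t ∈ Finset.range n, (∑ f : Fin (t + 1) → Fin n,
      if (Function.Injective f ∧ f 0 = a ∧ f (Fin.last t) = b)
        then (∏ s : Fin t, M (f s.castSucc) (f s.succ))
              * eF (Finset.image f Finset.univ)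
        else 0) = ∑ τ : Fin n → Fin n, ∑ f : Fin (t + 1) → Fin n,
        if ((Function.Injective f ∧ f 0 = a ∧ f (Fin.last t) = b) ∧
          ∀ s : Fin t, τ (f s.castSucc) = f s.succ) then
          (if ((∀ s ∈ ({b} : Finset (Fin n)), τ s = s) ∧
            ∀ j, ∃ k, τ^[k] j ∈ ({b} : Finset (Fin n)))
          then ∏ j ∈ ({b} : Finset (Fin n))ᶜ, M j (τ j) else 0) else 0 := by
    intro t _
    rw [Finset.sum_comm]
    refine Finset.sum_congr rfl fun f _ => ?_
    by_cases hf : Function.Injective f ∧ f 0 = a ∧ f (Fin.last t) = b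
    · rw [if_pos hf, heF, pfd_step M b f hf.1 hf.2.2]
      refine Finset.sum_congr rfl fun τ _ => ?_
      rw [← ite_and]
      refine if_congr ?_ rfl rfl
      tauto
    · rw [if_neg hf]
      refine (Finset.sum_eq_zero fun τ _ => ?_).symm
      rw [if_neg fun h => hf h.1]
  rw [Finset.sum_congr rfl key, Finset.sum_comm, heF]
  refine Finset.sum_congr rfl fun τ _ => ?_
  by_cases hτ : (∀ s ∈ ({b} : Finset (Fin n)), τ s = s) ∧
            ∀ j, ∃ k, τ^[k] j ∈ ({b} : Finset (Fin n))
  · refine pfd_count a b τ ?_ _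
    obtain ⟨k, hk⟩ := hτ.2 a
    exact ⟨k, Finset.mem_singleton.mp hk⟩
  · simp only [if_neg hτ, ite_self, Finset.sum_const_zero]
end
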